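/- arXiv:1604.04045 — 3 statements merged into one kernel-verified Lean document; each statement's English description precedes it below -/
import Mathlib

section
/- Let T be a tree, r a vertex, and let P₁,…,P_k be a maximum r-path partition of T with path lengths a₁ ≥ a₂ ≥ ⋯ ≥ a_k. Then the t-pebbling number satisfies π_t(T,r) = t·2^{a₁} + Σ_{i=2}^{k} 2^{a_i} − k + 1. -/
open SimpleGraph

/-- A single pebbling step: remove two pebbles from `u`, add one to a neighbor `v`. -/
def PebStep {V : Type} (G : SimpleGraph V) (C C' : V → ℕ) : Prop :=
  ∃ u v : V, G.Adj u v ∧ 2 ≤ C u ∧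
    C' u + 2 = C u ∧ C' v = C v + 1 ∧ ∀ w, w ≠ u → w ≠ v → C' w = C w

/-- `C` is `t`-fold `r`-solvable. -/
def TSolvable {V : Type} (G : SimpleGraph V) (C : V → ℕ) (r : V) (t : ℕ) : Prop :=
  ∃ C', Relation.ReflTransGen (PebStep G) C C' ∧ t ≤ C' r

/-- The `t`-pebbling number of `G` rooted at `r`. -/
noncomputable def piT {V : Type} (G : SimpleGraph V) (r : V) (t : ℕ) : ℕ :=
  sInf {s | ∀ C : V → ℕ, s ≤ ∑ᶠ v, C v → TSolvable G C r t}

/-- The pebbling number of `G` rooted at `r`. -/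
noncomputable def pin {V : Type} (G : SimpleGraph V) (r : V) : ℕ := piT G r 1

/-- The `t`-pebbling number of `G`. -/
noncomputable def piGt {V : Type} (G : SimpleGraph V) (t : ℕ) : ℕ := ⨆ r, piT G r t

/-- The pebbling number of `G`. -/
noncomputable def piG {V : Type} (G : SimpleGraph V) : ℕ := ⨆ r, pin G r

/-- Eccentricity of `r`. -/
noncomputable def eccG {V : Type} (G : SimpleGraph V) (r : V) : ℕ := ⨆ v, G.dist r v

/-- Diameter of `G`. -/
noncomputable def diamG {V : Type} (G : SimpleGraph V) : ℕ := ⨆ u, eccG G u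

/-- `MaxPP G F W L` : starting from the remaining edge set `F` and visited vertex set `W`,
the list `L` records the lengths of paths chosen by the maximum path-partition process:
repeatedly take a longest path whose edges remain in `F` and which starts in `W`,
record its length, remove its edges and add its vertices, until no edges remain. -/
inductive MaxPP {V : Type} (G : SimpleGraph V) : Set (Sym2 V) → Set V → List ℕ → Prop
  | nil (W : Set V) : MaxPP G ∅ W []
  | cons (F : Set (Sym2 V)) (W : Set V) {u v : V} (p : G.Walk u v)
      (hu : u ∈ W) (hp : p.IsPath) (hF : ∀ e ∈ p.edges, e ∈ F)
      (hmax : ∀ {a b : V} (q : G.Walk a b), a ∈ W → q.IsPath →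
        (∀ e ∈ q.edges, e ∈ F) → q.length ≤ p.length)
      (L : List ℕ)
      (h : MaxPP G (F \ {e | e ∈ p.edges}) (W ∪ {x | x ∈ p.support}) L) :
      MaxPP G F W (p.length :: L)


/-- `par` and `d` are the parent and depth functions of the tree `G` rooted at `r`. -/
structure IsParent {V : Type} (G : SimpleGraph V) (r : V) (par : V → V) (d : V → ℕ) : Prop where
  par_root : par r = r
  depth_root : d r = 0
  depth_par : ∀ v, v ≠ r → d v = d (par v) + 1
  adj_iff : ∀ u v, G.Adj u v ↔ (u ≠ r ∧ par u = v) ∨ (v ≠ r ∧ par v = u)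

theorem exists_isParent {V : Type} (T : SimpleGraph V) (hconn : T.Connected)
    (hac : T.IsAcyclic) (r : V) : ∃ par d, IsParent T r par d := by
  classical
  have hex : ∀ v, ∃ w, (v = r → w = r) ∧
      (v ≠ r → T.Adj v w ∧ T.dist r v = T.dist r w + 1) := by
    intro v
    by_cases hv : v = r
    · exact ⟨r, by simp, fun h => absurd hv h⟩
    · obtain ⟨p, hp⟩ := hconn.exists_walk_length_eq_dist v r
      cases p with
      | nil => exact absurd rfl hv
      | cons h q =>
        refine ⟨_, fun h => absurd h hv, fun _ => ⟨h, ?_⟩⟩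
        have h1 := T.dist_le q
        have h2 := h.diff_dist_adj (u := r)
        rw [SimpleGraph.Walk.length_cons] at hp
        rw [dist_comm (u := r), dist_comm (u := r)] at *
        omega
  choose par hroot hpar using hex
  have huniq : ∀ u v, T.Adj u v → T.dist r u = T.dist r v + 1 → par u = v := by
    intro u v huv hd
    have hur : u ≠ r := by
      rintro rfl
      simp at hd
    obtain ⟨hadj, hd'⟩ := hpar u hur
    have key : ∀ w (h : T.Adj u w), T.dist r u = T.dist r w + 1 →
        ∃ p : T.Walk u r, p.IsPath ∧ p.snd = w := by
      intro w h hdw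
      obtain ⟨q, hq⟩ := hconn.exists_walk_length_eq_dist w r
      refine ⟨Walk.cons h q, Walk.isPath_of_length_eq_dist _ ?_, by simp⟩
      rw [Walk.length_cons, hq, dist_comm, dist_comm (u := u), hdw]
    obtain ⟨p, hp, rfl⟩ := key _ huv hd
    obtain ⟨q, hq, hq'⟩ := key _ hadj hd'
    have := (hac.subsingleton_path u r).elim ⟨p, hp⟩ ⟨q, hq⟩
    rw [← hq', Subtype.mk.inj this]
  refine ⟨par, T.dist r, hroot r rfl, by simp, fun v hv => (hpar v hv).2, fun u v => ⟨?_, ?_⟩⟩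
  · intro h
    rcases (IsTree.mk hconn hac).dist_eq_dist_add_one_of_adj r h with h1 | h1
    · exact Or.inl ⟨by rintro rfl; simp at h1, huniq u v h h1⟩
    · exact Or.inr ⟨by rintro rfl; simp at h1, huniq v u h.symm h1⟩
  · rintro (⟨h, rfl⟩ | ⟨h, rfl⟩)
    · exact (hpar u h).1
    · exact (hpar v h).1.symm

/-- The maximum path partition process on a rooted tree, recording only the visited vertices `W`:
take a vertex `v` at maximal distance `a` from `W`, and add it to `W` with its ancestors. -/
inductive MaxParPP {V : Type} (par : V → V) : Set V → List ℕ → Prop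
  | nil : MaxParPP par Set.univ []
  | cons (W : Set V) (v : V) (a : ℕ) (hv : par^[a] v ∈ W) (hlt : ∀ i < a, par^[i] v ∉ W)
      (hmax : ∀ y n, (∀ i < n, par^[i] y ∉ W) → n ≤ a) (L : List ℕ)
      (h : MaxParPP par (W ∪ {x | ∃ i < a, par^[i] v = x}) L) : MaxParPP par W (a :: L)

theorem iterate_mem_of_closed {V : Type} {par : V → V} {W : Set V} (hW : ∀ x ∈ W, par x ∈ W)
    {x : V} (hx : x ∈ W) (n : ℕ) :
    par^[n] x ∈ W := by
  induction n with
  | zero => exact hx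
  | succ n ih =>
    rw [Function.iterate_succ_apply']
    exact hW _ ih

/-- A path leaving `W` along edges below `W` goes away from the root. -/
theorem par_getVert_of_isPath {V : Type} {G : SimpleGraph V} {par : V → V} {W : Set V}
    {u v : V} (p : G.Walk u v)
    (hu : u ∈ W) (hp : p.IsPath) (hF : ∀ e ∈ p.edges, ∃ x ∉ W, e = s(x, par x)) (i : ℕ)
    (hi : i < p.length) :
    p.getVert (i + 1) ∉ W ∧ par (p.getVert (i + 1)) = p.getVert i := by
  induction i with
  | zero =>
    obtain ⟨x, hx, he⟩ := hF _ (p.mk_mem_edges_iff_exists.2 ⟨0, hi, rfl⟩)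
    rw [Sym2.eq_iff] at he
    rcases he with ⟨h1, h2⟩ | ⟨h1, h2⟩
    · rw [Walk.getVert_zero] at h1
      exact absurd (h1 ▸ hu) hx
    · exact ⟨h2 ▸ hx, by rw [h2, h1]⟩
  | succ i ih =>
    obtain ⟨x, hx, he⟩ := hF _ (p.mk_mem_edges_iff_exists.2 ⟨i + 1, hi, rfl⟩)
    rw [Sym2.eq_iff] at he
    rcases he with ⟨h1, h2⟩ | ⟨h1, h2⟩
    · have h3 := (ih (by omega)).2
      rw [h1, ← h2] at h3
      have := hp.getVert_injOn (by simp; omega) (by simp; omega) h3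
      omega
    · exact ⟨h2 ▸ hx, by rw [h2, h1]⟩

theorem MaxParPP.of_cons {V : Type} {par : V → V} {W : Set V} {a : ℕ} {L : List ℕ}
    (hP : MaxParPP par W (a :: L)) :
    ∃ v, par^[a] v ∈ W ∧ (∀ i < a, par^[i] v ∉ W) ∧
      (∀ y n, (∀ i < n, par^[i] y ∉ W) → n ≤ a) ∧
      MaxParPP par (W ∪ {x | ∃ i < a, par^[i] v = x}) L := by
  cases hP with
  | cons _ v _ hv hlt hmax _ hL => exact ⟨v, hv, hlt, hmax, hL⟩

theorem closed_union_of_closed {V : Type} {par : V → V} {W : Set V} (hW : ∀ x ∈ W, par x ∈ W)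
    {v : V} {a : ℕ} (hv : par^[a] v ∈ W) :
    ∀ x ∈ W ∪ {x | ∃ i < a, par^[i] v = x}, par x ∈ W ∪ {x | ∃ i < a, par^[i] v = x} := by
  rintro x (hx | ⟨i, hi, rfl⟩)
  · exact Or.inl (hW x hx)
  · rw [← Function.iterate_succ_apply' par i v]
    rcases Nat.lt_or_ge (i + 1) a with hi' | hi'
    · exact Or.inr ⟨i + 1, hi', rfl⟩
    · obtain rfl : i + 1 = a := by omega
      exact Or.inl hv

/-- Two pebbles at `u` are worth `2 * w u` and become one pebble at `v` worth `w v`. -/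
theorem sum_mul_of_pebStep {V : Type} [Fintype V] {C C' : V → ℕ} {u v : V} (huv : u ≠ v)
    (hu : C' u + 2 = C u) (hv : C' v = C v + 1) (hne : ∀ x, x ≠ u → x ≠ v → C' x = C x)
    (w : V → ℕ) : ∑ x, C' x * w x + 2 * w u = ∑ x, C x * w x + w v := by
  classical
  have key : ∀ x, C' x * w x + (if x = u then 2 * w u else 0) =
      C x * w x + (if x = v then w v else 0) := by
    intro x
    by_cases hxu : x = u
    · subst hxu
      simp [huv, ← hu, add_mul]
    · by_cases hxv : x = v
      · subst hxv
        simp [hxu, hv, add_mul]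
      · simp [hxu, hxv, hne x hxu hxv]
  have := Finset.sum_congr (rfl : (Finset.univ : Finset V) = _) fun x _ => key x
  simpa [Finset.sum_add_distrib] using this

namespace IsParent

variable {V : Type} {G : SimpleGraph V} {r : V} {par : V → V} {d : V → ℕ}

theorem depth_iterate (h : IsParent G r par d) (n : ℕ) (v : V) : d (par^[n] v) = d v - n := by
  induction n with
  | zero => simp
  | succ n ih =>
    rw [Function.iterate_succ_apply']
    by_cases hv : par^[n] v = r
    · rw [hv, h.depth_root] at ih
      rw [hv, h.par_root, h.depth_root]
      omega
    · have := h.depth_par _ hv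
      omega

theorem depth_eq_zero (h : IsParent G r par d) {v : V} : d v = 0 ↔ v = r := by
  refine ⟨fun hv => ?_, fun hv => hv ▸ h.depth_root⟩
  by_contra hne
  have := h.depth_par v hne
  omega

theorem iterate_depth (h : IsParent G r par d) (v : V) : par^[d v] v = r := by
  rw [← h.depth_eq_zero, h.depth_iterate]
  omega

theorem iterate_ne_root (h : IsParent G r par d) {v : V} {i : ℕ} (hi : i < d v) :
    par^[i] v ≠ r := by
  intro hr
  rw [← h.depth_eq_zero, h.depth_iterate] at hr
  omega

/-- The walk from `y` to its `n`-th ancestor. -/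
theorem exists_ancestor_path (h : IsParent G r par d) (n : ℕ) (y : V)
    (hy : ∀ i < n, par^[i] y ≠ r) :
    ∃ q : G.Walk y (par^[n] y), q.IsPath ∧ q.length = n ∧ (∀ x ∈ q.support, d x ≤ d y) ∧
      ∀ e ∈ q.edges, ∃ i < n, e = s(par^[i] y, par (par^[i] y)) := by
  induction n generalizing y with
  | zero => exact ⟨Walk.nil, by simp, by simp, by simp, by simp⟩
  | succ n ih =>
    have hyr : y ≠ r := hy 0 (by omega)
    have hd := h.depth_par y hyr
    obtain ⟨q, hq, hlen, hsup, hedge⟩ := ih (par y) fun i hi => hy (i + 1) (by omega)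
    rw [Function.iterate_succ_apply]
    refine ⟨Walk.cons ((h.adj_iff y (par y)).2 (Or.inl ⟨hyr, rfl⟩)) q, ?_, ?_, ?_, ?_⟩
    · refine hq.cons fun hmem => ?_
      have := hsup _ hmem
      omega
    · simp [hlen]
    · intro x hx
      rw [Walk.support_cons, List.mem_cons] at hx
      rcases hx with rfl | hx
      · exact le_rfl
      · have := hsup _ hx
        omega
    · intro e he
      rw [Walk.edges_cons, List.mem_cons] at he
      rcases he with rfl | he
      · exact ⟨0, by omega, rfl⟩
      · obtain ⟨i, hi, rfl⟩ := hedge e he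
        exact ⟨i + 1, by omega, rfl⟩

theorem maxParPP (h : IsParent G r par d) {F : Set (Sym2 V)} {W : Set V} {L : List ℕ}
    (hP : MaxPP G F W L) (hr : r ∈ W) (hF : ∀ e, e ∈ F ↔ ∃ x ∉ W, e = s(x, par x)) :
    MaxParPP par W L := by
  induction hP with
  | nil W =>
    have : W = Set.univ := by
      rw [Set.eq_univ_iff_forall]
      intro x
      by_contra hx
      exact (hF s(x, par x)).2 ⟨x, hx, rfl⟩
    rw [this]
    exact MaxParPP.nil
  | @cons F W u v p hu hp hpF hmax L hL ih =>
    have hstep := par_getVert_of_isPath p hu hp fun e he => (hF e).1 (hpF e he)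
    have hvert : ∀ i ≤ p.length, par^[i] v = p.getVert (p.length - i) := by
      intro i hi
      induction i with
      | zero => simp
      | succ i ihi =>
        rw [Function.iterate_succ_apply', ihi (by omega)]
        have := (hstep (p.length - (i + 1)) (by omega)).2
        rwa [show p.length - (i + 1) + 1 = p.length - i by omega] at this
    have hset : W ∪ {x | ∃ i < p.length, par^[i] v = x} = W ∪ {x | x ∈ p.support} := by
      ext x
      simp only [Set.mem_union, Set.mem_ofPred_eq, Walk.mem_support_iff_exists_getVert]
      constructor
      · rintro (hx | ⟨i, hi, rfl⟩)
        · exact Or.inl hx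
        · exact Or.inr ⟨_, (hvert i hi.le).symm, by omega⟩
      · rintro (hx | ⟨n, rfl, hn⟩)
        · exact Or.inl hx
        · rcases Nat.eq_zero_or_pos n with rfl | hn0
          · left
            simpa using hu
          · refine Or.inr ⟨p.length - n, by omega, ?_⟩
            rw [hvert _ (by omega), Nat.sub_sub_self hn]
    refine MaxParPP.cons W v p.length ?_ ?_ ?_ L ?_
    · rw [hvert _ le_rfl]
      simpa using hu
    · intro i hi
      rw [hvert i hi.le]
      have := (hstep (p.length - i - 1) (by omega)).1
      rwa [show p.length - i - 1 + 1 = p.length - i by omega] at this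
    · intro y n hy
      classical
      have hex : ∃ k, par^[k] y ∈ W := ⟨d y, by rw [h.iterate_depth]; exact hr⟩
      have hk : n ≤ Nat.find hex := by
        by_contra! hlt
        exact hy _ hlt (Nat.find_spec hex)
      have hmin : ∀ i < Nat.find hex, par^[i] y ∉ W := fun i hi => Nat.find_min hex hi
      obtain ⟨q, hq, hlen, -, hedge⟩ :=
        h.exists_ancestor_path (Nat.find hex) y fun i hi he => hmin i hi (he ▸ hr)
      have := hmax q.reverse (Nat.find_spec hex) hq.reverse ?_
      · rw [Walk.length_reverse] at this
        omega
      · intro e he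
        rw [Walk.edges_reverse, List.mem_reverse] at he
        obtain ⟨i, hi, rfl⟩ := hedge e he
        exact (hF _).2 ⟨_, hmin i hi, rfl⟩
    · rw [hset]
      refine ih (Or.inl hr) fun e => ?_
      rw [Set.mem_sdiff, hF]
      constructor
      · rintro ⟨⟨x, hx, rfl⟩, he⟩
        refine ⟨x, ?_, rfl⟩
        rintro (hx' | hx')
        · exact hx hx'
        · obtain ⟨n, rfl, hn⟩ := Walk.mem_support_iff_exists_getVert.1 hx'
          rcases Nat.eq_zero_or_pos n with rfl | hn0
          · exact hx (by simpa using hu)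
          · obtain ⟨n, rfl⟩ := Nat.exists_eq_add_one.2 hn0
            apply he
            have h2 := (hstep n (by omega)).2
            rw [Set.mem_ofPred_eq, h2, Sym2.eq_swap]
            exact p.mk_mem_edges_iff_exists.2 ⟨n, by omega, rfl⟩
      · rintro ⟨x, hx, rfl⟩
        rw [Set.mem_union, not_or] at hx
        exact ⟨⟨x, hx.1, rfl⟩, fun he => hx.2 (p.fst_mem_support_of_mem_edges he)⟩

theorem le_depth_of_iterate_notMem (h : IsParent G r par d) {W : Set V} (hr : r ∈ W) {v : V}
    {a : ℕ} (hlt : ∀ i < a, par^[i] v ∉ W) : a ≤ d v := by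
  by_contra! hda
  exact hlt _ hda (h.iterate_depth v ▸ hr)

/-- Pebbles are moved greedily towards the root, which does not decrease the total weight. -/
theorem exists_greedy [Fintype V] (h : IsParent G r par d) {ht : V → ℕ}
    (hht : ∀ v, v ≠ r → ht v + 1 ≤ ht (par v)) (C : V → ℕ) :
    ∃ C', Relation.ReflTransGen (PebStep G) C C' ∧
      ∑ x, C x * 2 ^ ht x ≤ ∑ x, C' x * 2 ^ ht x ∧ ∀ v, v ≠ r → C' v ≤ 1 := by
  classical
  induction hn : ∑ x, C x using Nat.strong_induction_on generalizing C with
  | _ n ih =>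
    by_cases hC : ∀ v, v ≠ r → C v ≤ 1
    · exact ⟨C, Relation.ReflTransGen.refl, le_rfl, hC⟩
    · push Not at hC
      obtain ⟨u, hur, hu⟩ := hC
      have hadj : G.Adj u (par u) := (h.adj_iff _ _).2 (Or.inl ⟨hur, rfl⟩)
      have hne : u ≠ par u := hadj.ne
      let C₁ := Function.update (Function.update C u (C u - 2)) (par u) (C (par u) + 1)
      have h1 : C₁ u + 2 = C u := by
        simp [C₁, hne]
        omega
      have h2 : C₁ (par u) = C (par u) + 1 := by simp [C₁]
      have h3 : ∀ x, x ≠ u → x ≠ par u → C₁ x = C x := fun x hx hx' => by simp [C₁, hx, hx']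
      have hsum := sum_mul_of_pebStep hne h1 h2 h3 fun _ => 1
      have hwt := sum_mul_of_pebStep hne h1 h2 h3 fun x => 2 ^ ht x
      simp only [mul_one] at hsum
      have hpow : 2 * 2 ^ ht u ≤ 2 ^ ht (par u) := by
        rw [← pow_succ']
        exact Nat.pow_le_pow_right (by norm_num) (hht u hur)
      obtain ⟨C', hstep, hle, hC'⟩ := ih (∑ x, C₁ x) (by omega) C₁ rfl
      refine ⟨C', Relation.ReflTransGen.head ⟨u, par u, hadj, hu, h1, h2, h3⟩ hstep, ?_, hC'⟩
      omega

open Classical in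
/-- The maximal length of a downward path from `v`. -/
noncomputable def height [Fintype V] (par : V → V) (d : V → ℕ) (v : V) : ℕ :=
  Finset.univ.sup fun y => if ∃ n, par^[n] y = v then d y - d v else 0

theorem height_le_iff [Fintype V] {v : V} {k : ℕ} :
    height par d v ≤ k ↔ ∀ y n, par^[n] y = v → d y - d v ≤ k := by
  rw [height, Finset.sup_le_iff]
  constructor
  · intro hk y n hy
    have := hk y (Finset.mem_univ y)
    rwa [if_pos ⟨n, hy⟩] at this
  · intro hk y _
    split_ifs with hy
    · exact hk y hy.choose hy.choose_spec
    · exact Nat.zero_le k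

theorem height_par [Fintype V] (h : IsParent G r par d) {v : V} (hv : v ≠ r) :
    height par d v + 1 ≤ height par d (par v) := by
  have hd := h.depth_par v hv
  have hle := (height_le_iff (par := par) (d := d) (v := par v)).1 le_rfl
  have h1 := hle v 1 rfl
  suffices height par d v ≤ height par d (par v) - 1 by omega
  rw [height_le_iff]
  intro y n hy
  have h2 := hle y (n + 1) (by rw [Function.iterate_succ_apply', hy])
  have h3 := h.depth_iterate n y
  rw [hy] at h3
  omega

theorem sum_height_le [Fintype V] (h : IsParent G r par d) {W : Set V} {L : List ℕ}
    (hP : MaxParPP par W L) (hr : r ∈ W) (hW : ∀ x ∈ W, par x ∈ W) (s : Finset V)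
    (hs : ∀ x ∈ s, x ∉ W) :
    ∑ x ∈ s, 2 ^ height par d x ≤ (L.map fun a => 2 ^ a - 1).sum := by
  classical
  induction hP generalizing s with
  | nil =>
    rw [Finset.eq_empty_of_forall_notMem (s := s) fun x hx => hs x hx trivial]
    simp
  | cons W v a hv hlt hmax L hL ih =>
    have hda := h.le_depth_of_iterate_notMem hr hlt
    have hheight : ∀ i < a, height par d (par^[i] v) ≤ i := by
      intro i hi
      rw [height_le_iff]
      intro y n hy
      have hx : par^[n] y ∉ W := hy ▸ hlt i hi
      have hdn := h.depth_iterate n y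
      have := hmax y (n + (a - i)) fun j hj hmem => by
        rcases Nat.lt_or_ge j n with hjn | hjn
        · apply hx
          rw [show n = (n - j) + j by omega, Function.iterate_add_apply]
          exact iterate_mem_of_closed hW hmem _
        · apply hlt (j - n + i) (by omega)
          rwa [Function.iterate_add_apply, ← hy, ← Function.iterate_add_apply,
            show j - n + n = j by omega]
      rw [hy] at hdn
      have hne : par^[i] v ≠ r := fun he => hlt i hi (he ▸ hr)
      have := mt h.depth_eq_zero.1 hne
      omega
    have ih' := ih (Or.inl hr) (closed_union_of_closed hW hv)
      (s.filter fun x => ∀ i < a, par^[i] v ≠ x) (by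
        rintro x hx (hx' | ⟨i, hi, hx'⟩)
        · exact hs x (Finset.mem_filter.1 hx).1 hx'
        · exact (Finset.mem_filter.1 hx).2 i hi hx')
    have hpath : ∑ x ∈ s.filter (fun x => ¬ ∀ i < a, par^[i] v ≠ x), 2 ^ height par d x ≤
        2 ^ a - 1 := by
      calc _ ≤ ∑ x ∈ (Finset.range a).image (fun i => par^[i] v), 2 ^ height par d x := by
            refine Finset.sum_le_sum_of_subset fun x hx => ?_
            have := (Finset.mem_filter.1 hx).2
            push Not at this
            obtain ⟨i, hi, rfl⟩ := this
            exact Finset.mem_image.2 ⟨i, Finset.mem_range.2 hi, rfl⟩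
        _ = ∑ i ∈ Finset.range a, 2 ^ height par d (par^[i] v) := by
            refine Finset.sum_image fun i hi j hj hij => ?_
            have h1 := h.depth_iterate i v
            have h2 := h.depth_iterate j v
            rw [hij] at h1
            have := Finset.mem_range.1 hi
            have := Finset.mem_range.1 hj
            omega
        _ ≤ ∑ i ∈ Finset.range a, 2 ^ i := Finset.sum_le_sum fun i hi =>
            Nat.pow_le_pow_right (by norm_num) (hheight i (Finset.mem_range.1 hi))
        _ = 2 ^ a - 1 := by simp [Nat.geomSum_eq]
    rw [List.map_cons, List.sum_cons,
      ← Finset.sum_filter_add_sum_filter_not s fun x => ∀ i < a, par^[i] v ≠ x]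
    omega

theorem tSolvable_of_le_sum [Fintype V] (h : IsParent G r par d) {a : ℕ} {L : List ℕ}
    (hP : MaxParPP par {r} (a :: L)) {t : ℕ} {C : V → ℕ}
    (hC : t * 2 ^ a + (L.map fun a => 2 ^ a - 1).sum ≤ ∑ x, C x) : TSolvable G C r t := by
  classical
  obtain ⟨C', hstep, hle, hC'⟩ := h.exists_greedy (ht := height par d)
    (fun v hv => h.height_par hv) C
  refine ⟨C', hstep, ?_⟩
  have hsum := h.sum_height_le hP rfl (by simp [h.par_root]) (Finset.univ.erase r) (by simp)
  have hroot : height par d r ≤ a := by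
    rw [height_le_iff]
    intro y n _
    obtain ⟨v, -, -, hmax, -⟩ := hP.of_cons
    have := hmax y (d y) fun i hi => by simpa using h.iterate_ne_root hi
    omega
  have h1 : ∑ x, C x ≤ ∑ x, C x * 2 ^ height par d x :=
    Finset.sum_le_sum fun x _ => Nat.le_mul_of_pos_right _ (by positivity)
  have h2 : ∑ x ∈ Finset.univ.erase r, C' x * 2 ^ height par d x ≤
      ∑ x ∈ Finset.univ.erase r, 2 ^ height par d x := by
    refine Finset.sum_le_sum fun x hx => ?_
    have := Nat.mul_le_mul_right (2 ^ height par d x) (hC' x (Finset.mem_erase.1 hx).1)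
    omega
  have h3 : C' r * 2 ^ height par d r ≤ C' r * 2 ^ a :=
    Nat.mul_le_mul_left _ (Nat.pow_le_pow_right (by norm_num) hroot)
  rw [← Finset.add_sum_erase _ (fun x => C' x * 2 ^ height par d x) (Finset.mem_univ r)] at hle
  rw [List.map_cons, List.sum_cons] at hsum
  by_contra! hlt
  have h4 : (C' r + 1) * 2 ^ a ≤ t * 2 ^ a := Nat.mul_le_mul_right _ hlt
  have h5 : 0 < 2 ^ a := by positivity
  rw [add_mul] at h4
  omega

open Classical in
/-- The number of pebbles that `x` receives when each child `c` of `x` passes on as many as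
possible of its `m c` pebbles. -/
noncomputable def childSum [Fintype V] (r : V) (par : V → V) (m : V → ℕ) (x : V) : ℕ :=
  ∑ c, if c ≠ r ∧ par c = x then m c / 2 else 0

/-- `m` certifies an upper bound on the numbers of pebbles that `C` can bring to the vertices. -/
def Certifies [Fintype V] (r : V) (par : V → V) (C m : V → ℕ) : Prop :=
  ∀ x, C x + childSum r par m x ≤ m x

open Classical in
theorem childSum_update [Fintype V] {u : V} (hu : u ≠ r) (m : V → ℕ) (k : ℕ) (x : V) :
    childSum r par (Function.update m u k) x + (if par u = x then m u / 2 else 0) =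
      childSum r par m x + (if par u = x then k / 2 else 0) := by
  have key : ∀ c, (if c ≠ r ∧ par c = x then Function.update m u k c / 2 else 0) +
      (if c = u then if par u = x then m u / 2 else 0 else 0) =
      (if c ≠ r ∧ par c = x then m c / 2 else 0) +
      (if c = u then if par u = x then k / 2 else 0 else 0) := by
    intro c
    by_cases hc : c = u
    · subst hc
      by_cases hx : par c = x <;> simp [hu, hx, add_comm]
    · simp [hc]
  have := Finset.sum_congr (rfl : (Finset.univ : Finset V) = _) fun x _ => key x
  simpa [Finset.sum_add_distrib, childSum] using this

theorem certifies_pebStep [Fintype V] (h : IsParent G r par d) {C C' m : V → ℕ}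
    (hm : Certifies r par C m) (hstep : PebStep G C C') :
    ∃ m', Certifies r par C' m' ∧ m' r ≤ m r := by
  classical
  obtain ⟨u, v, hadj, hu2, hu, hv, hne⟩ := hstep
  have huv := hadj.ne
  rcases (h.adj_iff u v).1 hadj with ⟨hur, rfl⟩ | ⟨hvr, rfl⟩
  · refine ⟨Function.update m u (m u - 2), fun x => ?_, by simp [hur.symm]⟩
    have h1 := childSum_update (par := par) hur m (m u - 2) x
    have h2 := hm x
    have h3 := hm u
    by_cases hxu : x = u
    · subst hxu
      rw [if_neg huv.symm, if_neg huv.symm] at h1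
      rw [Function.update_self]
      omega
    · rw [Function.update_of_ne hxu]
      by_cases hxp : x = par u
      · subst hxp
        rw [if_pos rfl, if_pos rfl] at h1
        omega
      · have := hne x hxu hxp
        rw [if_neg (Ne.symm hxp), if_neg (Ne.symm hxp)] at h1
        omega
  · refine ⟨Function.update m v (m v + 1), fun x => ?_, by simp [hvr.symm]⟩
    have h1 := childSum_update (par := par) hvr m (m v + 1) x
    have h2 := hm x
    by_cases hxv : x = v
    · subst hxv
      rw [if_neg huv, if_neg huv] at h1
      rw [Function.update_self]
      omega
    · rw [Function.update_of_ne hxv]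
      by_cases hxp : x = par v
      · subst hxp
        rw [if_pos rfl, if_pos rfl] at h1
        omega
      · have := hne x hxp hxv
        rw [if_neg (Ne.symm hxp), if_neg (Ne.symm hxp)] at h1
        omega

theorem not_tSolvable [Fintype V] (h : IsParent G r par d) {C m : V → ℕ}
    (hm : Certifies r par C m) {t : ℕ} (ht : m r < t) : ¬ TSolvable G C r t := by
  rintro ⟨C', hstep, hC'⟩
  obtain ⟨m', hm', hle⟩ : ∃ m', Certifies r par C' m' ∧ m' r ≤ m r := by
    clear hC'
    induction hstep with
    | refl => exact ⟨m, hm, le_rfl⟩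
    | tail _ hs ih =>
      obtain ⟨m₁, hm₁, h1⟩ := ih
      obtain ⟨m₂, hm₂, h2⟩ := h.certifies_pebStep hm₁ hs
      exact ⟨m₂, hm₂, h2.trans h1⟩
  have := hm' r
  omega

theorem certifies_add [Fintype V] {C C' m m' : V → ℕ} (hm : Certifies r par C m)
    (hm' : Certifies r par C' m') (hdisj : ∀ x, m x = 0 ∨ m' x = 0) :
    Certifies r par (C + C') (m + m') := by
  intro x
  have : childSum r par (m + m') x = childSum r par m x + childSum r par m' x := by
    rw [childSum, childSum, childSum, ← Finset.sum_add_distrib]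
    refine Finset.sum_congr rfl fun c _ => ?_
    rcases hdisj c with hc | hc <;> simp [hc]
  have h1 := hm x
  have h2 := hm' x
  simp only [Pi.add_apply]
  omega

open Classical in
/-- If `n` pebbles are placed on `v`, its `i`-th ancestor obtains at most `n / 2 ^ i` pebbles. -/
theorem exists_certifies_single [Fintype V] (h : IsParent G r par d) (v : V) (n : ℕ) :
    ∃ g, Certifies r par (Pi.single v n) g ∧ (∀ i ≤ d v, g (par^[i] v) = n / 2 ^ i) ∧
      ∀ x, (∀ i ≤ d v, par^[i] v ≠ x) → g x = 0 := by
  induction hk : d v generalizing v n with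
  | zero =>
    obtain rfl := h.depth_eq_zero.1 hk
    refine ⟨Pi.single v n, fun x => ?_, by simp, fun x hx => ?_⟩
    · have : childSum v par (Pi.single v n) x = 0 := by
        refine Finset.sum_eq_zero fun c _ => ?_
        by_cases hc : c = v <;> simp [hc]
      omega
    · exact Pi.single_eq_of_ne (hx 0 le_rfl).symm _
  | succ k ih =>
    have hvr : v ≠ r := by
      rintro rfl
      rw [h.depth_root] at hk
      omega
    have hd := h.depth_par v hvr
    obtain ⟨g, hg, hanc, hzero⟩ := ih (par v) (n / 2) (by omega)
    have hvp : v ≠ par v := by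
      intro he
      rw [← he] at hd
      omega
    have hne : ∀ i, par^[i] (par v) ≠ v := fun i hi => by
      have := h.depth_iterate i (par v)
      rw [hi] at this
      omega
    have hgv : g v = 0 := hzero v fun i _ => hne i
    refine ⟨Function.update g v n, fun x => ?_, ?_, ?_⟩
    · have h1 := childSum_update (par := par) hvr g n x
      have h2 := hg x
      rw [hgv] at h1
      by_cases hxv : x = v
      · subst hxv
        rw [Pi.single_eq_of_ne hvp, hgv] at h2
        rw [if_neg hvp.symm, if_neg hvp.symm] at h1
        rw [Pi.single_eq_same, Function.update_self]
        omega
      · rw [Pi.single_eq_of_ne hxv, Function.update_of_ne hxv]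
        by_cases hxp : x = par v
        · subst hxp
          rw [Pi.single_eq_same] at h2
          rw [if_pos rfl, if_pos rfl] at h1
          omega
        · rw [Pi.single_eq_of_ne hxp] at h2
          rw [if_neg (Ne.symm hxp), if_neg (Ne.symm hxp)] at h1
          omega
    · rintro (_ | i) hi
      · simp
      · rw [Function.iterate_succ_apply, Function.update_of_ne (hne i), hanc i (by omega),
          Nat.div_div_eq_div_mul, pow_succ']
    · intro x hx
      have hxv : x ≠ v := (hx 0 (by omega)).symm
      rw [Function.update_of_ne hxv]
      exact hzero x fun i hi => hx (i + 1) (by omega)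

theorem exists_certifies [Fintype V] (h : IsParent G r par d) {W : Set V} {L : List ℕ}
    (hP : MaxParPP par W L) (hr : r ∈ W) (hW : ∀ x ∈ W, par x ∈ W) :
    ∃ C m, Certifies r par C m ∧ (∀ x ∈ W, m x = 0) ∧
      ∑ x, C x = (L.map fun a => 2 ^ a - 1).sum := by
  classical
  induction hP with
  | nil => exact ⟨0, 0, fun x => by simp [childSum], by simp, by simp⟩
  | cons W v a hv hlt _ L _ ih =>
    obtain ⟨C, m, hm, hzero, hsum⟩ := ih (Or.inl hr) (closed_union_of_closed hW hv)
    obtain ⟨g, hg, hanc, hg0⟩ := h.exists_certifies_single v (2 ^ a - 1)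
    have hpos : 0 < 2 ^ a := by positivity
    have hsupp : ∀ x, (∀ i < a, par^[i] v ≠ x) → g x = 0 := by
      intro x hx
      by_cases hex : ∃ i ≤ d v, par^[i] v = x
      · obtain ⟨i, hi, rfl⟩ := hex
        have hai : a ≤ i := by
          by_contra! hia
          exact hx i hia rfl
        have := Nat.pow_le_pow_right (n := 2) (by norm_num) hai
        rw [hanc i hi, Nat.div_eq_of_lt (by omega)]
      · push Not at hex
        exact hg0 x hex
    refine ⟨C + Pi.single v (2 ^ a - 1), m + g, certifies_add hm hg fun x => ?_, fun x hx => ?_, ?_⟩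
    · by_cases hx : ∃ i < a, par^[i] v = x
      · exact Or.inl (hzero x (Or.inr hx))
      · push Not at hx
        exact Or.inr (hsupp x hx)
    · rw [Pi.add_apply, hzero x (Or.inl hx), hsupp x fun i hi he => hlt i hi (he ▸ hx)]
    · simp [Finset.sum_add_distrib, hsum, add_comm]

theorem exists_not_tSolvable [Fintype V] (h : IsParent G r par d) {a : ℕ} {L : List ℕ}
    (hP : MaxParPP par {r} (a :: L)) {t : ℕ} (ht : 1 ≤ t) :
    ∃ C : V → ℕ, ∑ x, C x + 1 = t * 2 ^ a + (L.map fun a => 2 ^ a - 1).sum ∧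
      ¬ TSolvable G C r t := by
  classical
  obtain ⟨v, hv, hlt, -, hL⟩ := hP.of_cons
  have hW : ∀ x ∈ ({r} : Set V), par x ∈ ({r} : Set V) := by simp [h.par_root]
  have hda : d v = a := by
    refine le_antisymm ?_ (h.le_depth_of_iterate_notMem (Set.mem_singleton r) hlt)
    by_contra! hda
    exact h.iterate_ne_root hda hv
  obtain ⟨C, m, hm, hzero, hsum⟩ := h.exists_certifies hL (Or.inl rfl) (closed_union_of_closed hW hv)
  obtain ⟨g, hg, hanc, hg0⟩ := h.exists_certifies_single v (t * 2 ^ a - 1)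
  have hpos : 0 < 2 ^ a := by positivity
  have hta : 1 * 2 ^ a ≤ t * 2 ^ a := Nat.mul_le_mul_right _ ht
  refine ⟨C + Pi.single v (t * 2 ^ a - 1), ?_,
    h.not_tSolvable (certifies_add hm hg fun x => ?_) ?_⟩
  · simp only [Pi.add_apply, Finset.sum_add_distrib, hsum, Finset.sum_pi_single',
      Finset.mem_univ, if_true]
    omega
  · by_cases hx : ∃ i ≤ d v, par^[i] v = x
    · left
      apply hzero
      obtain ⟨i, hi, rfl⟩ := hx
      rcases Nat.lt_or_ge i a with hia | hia
      · exact Or.inr ⟨i, hia, rfl⟩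
      · obtain rfl : i = a := by omega
        exact Or.inl hv
    · push Not at hx
      exact Or.inr (hg0 x hx)
  · have h1 := hanc (d v) le_rfl
    rw [h.iterate_depth, hda] at h1
    rw [Pi.add_apply, hzero r (Or.inl rfl), h1, zero_add, Nat.div_lt_iff_lt_mul hpos]
    omega

end IsParent

theorem sum_map_pow_sub_one (L : List ℕ) :
    (L.map fun a => 2 ^ a - 1).sum + L.length = (L.map fun a => 2 ^ a).sum := by
  induction L with
  | nil => rfl
  | cons a L ih =>
    have : 0 < 2 ^ a := by positivity
    simp only [List.map_cons, List.sum_cons, List.length_cons]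
    omega

/-- for a tree `T` with a maximum `r`-path partition of path lengths
`a₁ ≥ a₂ ≥ ⋯ ≥ a_k`, we have `π_t(T,r) = t·2^{a₁} + Σ_{i=2}^k 2^{a_i} − k + 1`. -/
theorem tree_t_pebbling_number {V : Type} [Fintype V] (T : SimpleGraph V)
    (hconn : T.Connected) (hac : T.IsAcyclic) (r : V) (t : ℕ) (ht : 1 ≤ t)
    (a₁ : ℕ) (L : List ℕ)
    (hpart : MaxPP T T.edgeSet {r} (a₁ :: L)) :
    piT T r t = t * 2 ^ a₁ + (L.map fun a => 2 ^ a).sum + 1 - (a₁ :: L).length := by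
  obtain ⟨par, d, h⟩ := exists_isParent T hconn hac r
  have hP : MaxParPP par {r} (a₁ :: L) := h.maxParPP hpart rfl fun e => by
    refine ⟨fun he => ?_, ?_⟩
    · induction e with
      | _ u v =>
        rcases (h.adj_iff u v).1 he with ⟨hu, rfl⟩ | ⟨hv, rfl⟩
        · exact ⟨u, hu, rfl⟩
        · exact ⟨v, hv, Sym2.eq_swap⟩
    · rintro ⟨x, hx, rfl⟩
      exact (h.adj_iff _ _).2 (Or.inl ⟨hx, rfl⟩)
  have hval : t * 2 ^ a₁ + (L.map fun a => 2 ^ a).sum + 1 - (a₁ :: L).length =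
      t * 2 ^ a₁ + (L.map fun a => 2 ^ a - 1).sum := by
    rw [← sum_map_pow_sub_one, List.length_cons]
    omega
  rw [hval]
  have hmem : ∀ C : V → ℕ, t * 2 ^ a₁ + (L.map fun a => 2 ^ a - 1).sum ≤ ∑ᶠ v, C v →
      TSolvable T C r t := fun C hC =>
    h.tSolvable_of_le_sum hP (by rwa [finsum_eq_sum_of_fintype] at hC)
  refine le_antisymm (Nat.sInf_le hmem) (le_csInf ⟨_, hmem⟩ fun s hs => ?_)
  obtain ⟨C, hsum, hC⟩ := h.exists_not_tSolvable hP ht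
  by_contra! hlt
  refine hC (hs C ?_)
  rw [finsum_eq_sum_of_fintype]
  omega
end

section
/- If G is a 2-path on n vertices with diameter d ≤ 2, then π_t(G) = t·2^d + n − 2d. -/
open SimpleGraph

/-- `G` is a 2-tree: either `K₂` or obtained by adding a 2-simplicial vertex to a
2-tree. -/
inductive IsTwoTree : {V : Type} → SimpleGraph V → Prop
  | base {V : Type} (G : SimpleGraph V) (e : V ≃ Fin 2)
      (h : ∀ a b : V, G.Adj a b ↔ a ≠ b) : IsTwoTree G
  | extend {V : Type} (G : SimpleGraph V) (v : V)
      (hdeg : (G.neighborSet v).ncard = 2)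
      (hcl : G.IsClique (G.neighborSet v))
      (h : IsTwoTree (G.induce {u | u ≠ v})) : IsTwoTree G

/-- A simplicial vertex: its neighborhood is a clique. -/
def IsSimplicial {V : Type} (G : SimpleGraph V) (v : V) : Prop :=
  G.IsClique (G.neighborSet v)

/-- A 2-path: a 2-tree with exactly two simplicial vertices. -/
def IsTwoPath {V : Type} (G : SimpleGraph V) : Prop :=
  IsTwoTree G ∧ {v | IsSimplicial G v}.ncard = 2

/-- The edges of the `i`-th fan of a fan decomposition with spine `x` and fan
vertices `v i 1, …, v i (k i)`. -/
def FanEdge {V : Type} (x : ℕ → V) (k : ℕ → ℕ) (v : ℕ → ℕ → V) (i : ℕ)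
    (a b : V) : Prop :=
  s(a, b) = s(x (i - 1), x i) ∨ s(a, b) = s(x i, x (i + 1)) ∨
  s(a, b) = s(x (i - 1), v i 1) ∨ s(a, b) = s(v i (k i), x (i + 1)) ∨
  (∃ j, 1 ≤ j ∧ j < k i ∧ s(a, b) = s(v i j, v i (j + 1))) ∨
  (∃ j, 1 ≤ j ∧ j ≤ k i ∧ s(a, b) = s(x i, v i j))

/-- The set of fan vertices of the `i`-th fan. -/
def FanVerts {V : Type} (k : ℕ → ℕ) (v : ℕ → ℕ → V) (i : ℕ) : Set V :=
  {w | ∃ j, 1 ≤ j ∧ j ≤ k i ∧ w = v i j}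

/-- `FanData G d x k v` : the data `(x, k, v)` exhibits `G` as an overlapping fan
graph of diameter `d` with spine `x 0, x 1, …, x d` and, for `1 ≤ i ≤ d − 1`, an
`x_{i−1}x_{i+1}`-fan centered on `x i` with fan vertices `v i 1, …, v i (k i)`;
consecutive fans are opposite-sided or same-sided, and `G` is the union of the
fans. -/
def FanData {V : Type} (G : SimpleGraph V) (d : ℕ) (x : ℕ → V) (k : ℕ → ℕ)
    (v : ℕ → ℕ → V) : Prop :=
  2 ≤ d ∧
  -- the spine is a shortest path between two vertices realizing the diameter
  (∀ u w : V, G.dist u w ≤ d) ∧ G.dist (x 0) (x d) = d ∧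
  (∀ i < d, G.Adj (x i) (x (i + 1))) ∧
  (∀ i ≤ d, ∀ l ≤ d, x i = x l → i = l) ∧
  -- fan structure
  (∀ i, 1 ≤ i → i ≤ d - 1 →
    1 ≤ k i ∧
    G.Adj (x (i - 1)) (v i 1) ∧
    (∀ j, 1 ≤ j → j < k i → G.Adj (v i j) (v i (j + 1))) ∧
    G.Adj (v i (k i)) (x (i + 1)) ∧
    (∀ j, 1 ≤ j → j ≤ k i → G.Adj (x i) (v i j)) ∧
    (∀ j, 1 ≤ j → j ≤ k i → ∀ j', 1 ≤ j' → j' ≤ k i → v i j = v i j' → j = j') ∧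
    (∀ j, 1 ≤ j → j ≤ k i → ∀ l ≤ d, v i j ≠ x l)) ∧
  -- consecutive fans are opposite-sided or same-sided
  (∀ i, 1 ≤ i → i + 1 ≤ d - 1 →
    (FanVerts k v i ∩ FanVerts k v (i + 1) = ∅) ∨
    (v i (k i) = v (i + 1) 1 ∧
      FanVerts k v i ∩ FanVerts k v (i + 1) = {v i (k i)})) ∧
  -- G is the union of the fans: vertices
  (∀ u : V, (∃ l ≤ d, u = x l) ∨
    ∃ i, 1 ≤ i ∧ i ≤ d - 1 ∧ u ∈ FanVerts k v i) ∧
  -- G is the union of the fans: edges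
  (∀ a b : V, G.Adj a b → ∃ i, 1 ≤ i ∧ i ≤ d - 1 ∧ FanEdge x k v i a b)

/-- `G` is an overlapping fan graph. -/
def IsOverlappingFan {V : Type} (G : SimpleGraph V) : Prop :=
  ∃ (d : ℕ) (x : ℕ → V) (k : ℕ → ℕ) (v : ℕ → ℕ → V), FanData G d x k v

theorem IsSimplicial.of_induce_compl {V : Type} {G : SimpleGraph V} {v : V}
    {s : ({u | u ≠ v} : Set V)} (hs : IsSimplicial (G.induce {u | u ≠ v}) s)
    (hv : ¬ G.Adj v s) : IsSimplicial G s := by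
  intro x hx y hy hxy
  have hxv : x ≠ v := by rintro rfl; exact hv (G.adj_symm hx)
  have hyv : y ≠ v := by rintro rfl; exact hv (G.adj_symm hy)
  exact hs (x := ⟨x, hxv⟩) hx (y := ⟨y, hyv⟩) hy (by simpa using hxy)

/-- In a 2-tree with at least three vertices, some simplicial vertex avoids any given edge. -/
theorem IsTwoTree.exists_isSimplicial_ne {V : Type} {G : SimpleGraph V} (hG : IsTwoTree G) :
    ∀ a b w : V, G.Adj a b → w ≠ a → w ≠ b → ∃ s, IsSimplicial G s ∧ s ≠ a ∧ s ≠ b := by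
  induction hG with
  | base G e h =>
    intro a b w hab hwa hwb
    have h1 := e.injective.ne hwa
    have h2 := e.injective.ne hwb
    have h3 := e.injective.ne hab.ne
    omega
  | @extend V G v hdeg hcl h ih =>
    have key : ∀ b, G.Adj v b → ∃ s, IsSimplicial G s ∧ s ≠ v ∧ s ≠ b := by
      intro b hvb
      obtain ⟨e, he, hN⟩ : ∃ e, e ≠ b ∧ ∀ x, G.Adj v x ↔ x = b ∨ x = e := by
        obtain ⟨p, q, hpq, hN⟩ := Set.ncard_eq_two.1 hdeg
        have hN' : ∀ x, G.Adj v x ↔ x = p ∨ x = q := fun x => by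
          rw [← SimpleGraph.mem_neighborSet, hN]; simp
        rcases (hN' b).1 hvb with rfl | rfl
        · exact ⟨q, hpq.symm, hN'⟩
        · exact ⟨p, hpq, fun x => by rw [hN', or_comm]⟩
      have hve : G.Adj v e := (hN e).2 (Or.inr rfl)
      have hbe : G.Adj b e := hcl hvb hve he.symm
      by_cases hw : ∃ w, w ≠ v ∧ w ≠ b ∧ w ≠ e
      · obtain ⟨w, hwv, hwb, hwe⟩ := hw
        obtain ⟨s, hs, hsb, hse⟩ := ih ⟨b, hvb.ne'⟩ ⟨e, hve.ne'⟩ ⟨w, hwv⟩ hbe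
          (by simpa using hwb) (by simpa using hwe)
        have hsb' : (s : V) ≠ b := fun h => hsb (Subtype.ext h)
        have hse' : (s : V) ≠ e := fun h => hse (Subtype.ext h)
        refine ⟨s, hs.of_induce_compl ?_, s.2, hsb'⟩
        rw [hN]; tauto
      · push Not at hw
        refine ⟨e, ?_, hve.ne', he⟩
        intro x hx y hy hxy
        have hx' : G.Adj e x := hx
        have hy' : G.Adj e y := hy
        have hx1 : x = v ∨ x = b := by
          by_contra! hcon
          exact hx'.ne (hw x hcon.1 hcon.2).symm
        have hy1 : y = v ∨ y = b := by
          by_contra! hcon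
          exact hy'.ne (hw y hcon.1 hcon.2).symm
        rcases hx1 with rfl | rfl <;> rcases hy1 with rfl | rfl
        · exact absurd rfl hxy
        · exact hvb
        · exact hvb.symm
        · exact absurd rfl hxy
    intro a b w hab hwa hwb
    by_cases hva : v = a
    · subst hva; exact key b hab
    by_cases hvb : v = b
    · subst hvb
      obtain ⟨s, hs, h1, h2⟩ := key a hab.symm
      exact ⟨s, hs, h2, h1⟩
    exact ⟨v, hcl, hva, hvb⟩

/-- In a 2-tree, a vertex that misses some vertex misses a simplicial vertex. -/
theorem IsTwoTree.exists_isSimplicial_not_adj {V : Type} {G : SimpleGraph V}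
    (hG : IsTwoTree G) :
    ∀ c w : V, w ≠ c → ¬ G.Adj c w → ∃ s, IsSimplicial G s ∧ s ≠ c ∧ ¬ G.Adj c s := by
  induction hG with
  | base G e h =>
    intro c w hw hcw
    exact absurd ((h c w).2 hw.symm) hcw
  | @extend V G v hdeg hcl h ih =>
    intro c w hw hcw
    obtain ⟨p, q, hpq, hN⟩ := Set.ncard_eq_two.1 hdeg
    have hN' : ∀ x, G.Adj v x ↔ x = p ∨ x = q := fun x => by
      rw [← SimpleGraph.mem_neighborSet, hN]; simp
    have hvp : G.Adj v p := (hN' p).2 (Or.inl rfl)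
    have hvq : G.Adj v q := (hN' q).2 (Or.inr rfl)
    have hadj : G.Adj p q := hcl hvp hvq hpq
    by_cases hcv : c = v
    · subst hcv
      have hw' := (hN' w).not.1 hcw
      push Not at hw'
      obtain ⟨s, hs, h1, h2⟩ := h.exists_isSimplicial_ne ⟨p, hvp.ne'⟩ ⟨q, hvq.ne'⟩ ⟨w, hw⟩ hadj
        (by simpa using hw'.1) (by simpa using hw'.2)
      have h1' : (s : V) ≠ p := fun h => h1 (Subtype.ext h)
      have h2' : (s : V) ≠ q := fun h => h2 (Subtype.ext h)
      have hns : ¬ G.Adj c s := by rw [hN']; tauto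
      exact ⟨s, hs.of_induce_compl hns, s.2, hns⟩
    by_cases hvc : G.Adj c v
    · have hwv : w ≠ v := by rintro rfl; exact hcw hvc
      obtain ⟨s, hs, h1, h2⟩ := ih ⟨c, hcv⟩ ⟨w, hwv⟩ (by simpa using hw) hcw
      have h1' : (s : V) ≠ c := fun h => h1 (Subtype.ext h)
      have h2' : ¬ G.Adj c s := h2
      refine ⟨s, hs.of_induce_compl ?_, h1', h2'⟩
      intro hvs
      exact h2' (hcl hvc.symm hvs h1'.symm)
    · exact ⟨v, hcl, fun h => hcv h.symm, hvc⟩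

/-- 2-trees stay connected after removal of at most one vertex. -/
theorem IsTwoTree.exists_walk_avoiding {V : Type} {G : SimpleGraph V} (hG : IsTwoTree G) :
    ∀ S : Set V, S.Subsingleton → ∀ x y, x ∉ S → y ∉ S →
      ∃ p : G.Walk x y, ∀ z ∈ p.support, z ∉ S := by
  induction hG with
  | base G e h =>
    intro S hS x y hx hy
    by_cases hxy : x = y
    · subst hxy
      exact ⟨.nil, by simpa using hx⟩
    · exact ⟨.cons ((h x y).2 hxy) .nil, by simp [hx, hy]⟩
  | @extend V G v hdeg hcl h ih =>
    intro S hS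
    have ih' : ∀ x y, x ≠ v → y ≠ v → x ∉ S → y ∉ S →
        ∃ p : G.Walk x y, ∀ z ∈ p.support, z ∉ S := by
      intro x y hxv hyv hx hy
      obtain ⟨p, hp⟩ := ih (Subtype.val ⁻¹' S) (hS.preimage Subtype.val_injective)
        ⟨x, hxv⟩ ⟨y, hyv⟩ hx hy
      refine ⟨p.map (SimpleGraph.Embedding.induce _).toHom, ?_⟩
      intro z hz
      erw [SimpleGraph.Walk.support_map] at hz
      obtain ⟨u, hu, rfl⟩ := List.mem_map.1 hz
      exact hp u hu
    have hv : ∀ y, v ∉ S → y ≠ v → y ∉ S → ∃ p : G.Walk v y, ∀ z ∈ p.support, z ∉ S := by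
      intro y hvS hyv hy
      obtain ⟨p, q, hpq, hN⟩ := Set.ncard_eq_two.1 hdeg
      obtain ⟨a, ha, haS⟩ : ∃ a, G.Adj v a ∧ a ∉ S := by
        have hp : p ∈ G.neighborSet v := by rw [hN]; simp
        have hq : q ∈ G.neighborSet v := by rw [hN]; simp
        by_cases hpS : p ∈ S
        · exact ⟨q, hq, fun hqS => hpq (hS hpS hqS)⟩
        · exact ⟨p, hp, hpS⟩
      obtain ⟨w, hw⟩ := ih' a y ha.ne' hyv haS hy
      refine ⟨.cons ha w, ?_⟩
      intro z hz
      rw [SimpleGraph.Walk.support_cons, List.mem_cons] at hz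
      rcases hz with rfl | hz
      · exact hvS
      · exact hw z hz
    intro x y hx hy
    by_cases hxv : x = v
    · subst hxv
      by_cases hyx : y = x
      · subst hyx
        exact ⟨.nil, by simpa using hx⟩
      · exact hv y hx hyx hy
    · by_cases hyv : y = v
      · subst hyv
        obtain ⟨p, hp⟩ := hv x hy hxv hx
        exact ⟨p.reverse, by simpa using hp⟩
      · exact ih' x y hxv hyv hx hy

theorem IsTwoTree.connected {V : Type} {G : SimpleGraph V} (hG : IsTwoTree G) (x y : V) :
    G.Reachable x y := by
  obtain ⟨p, -⟩ := hG.exists_walk_avoiding ∅ Set.subsingleton_empty x y (by simp) (by simp)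
  exact ⟨p⟩

theorem PebStep.of_adj {V : Type} [DecidableEq V] {G : SimpleGraph V} {u v : V}
    (h : G.Adj u v) (C : V → ℕ) (hC : 2 ≤ C u) :
    PebStep G C (Function.update (Function.update C u (C u - 2)) v (C v + 1)) := by
  refine ⟨u, v, h, hC, ?_, by simp, ?_⟩
  · rw [Function.update_of_ne h.ne, Function.update_self]; omega
  · intro w hwu hwv
    rw [Function.update_of_ne hwv, Function.update_of_ne hwu]

/-- Pebbles on a set `S` of neighbors of `c` can be moved to `c` in pairs. -/
theorem exists_collect {V : Type} [DecidableEq V] {G : SimpleGraph V} {c : V} {S : Finset V}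
    (hS : ∀ v ∈ S, G.Adj v c) (k : ℕ) :
    ∀ C : V → ℕ, k ≤ ∑ v ∈ S, C v / 2 → ∃ C', Relation.ReflTransGen (PebStep G) C C' ∧
      C' c = C c + k ∧ ∀ w ∉ S, w ≠ c → C' w = C w := by
  induction k with
  | zero => exact fun C _ => ⟨C, .refl, rfl, fun _ _ _ => rfl⟩
  | succ k ih =>
    intro C hC
    obtain ⟨v, hv, hv2⟩ : ∃ v ∈ S, C v / 2 ≠ 0 := by
      apply Finset.exists_ne_zero_of_sum_ne_zero; omega
    have hadj := hS v hv
    have hcS : c ∉ S := fun h => G.loopless.irrefl c (hS c h)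
    set D := Function.update (Function.update C v (C v - 2)) c (C c + 1) with hD
    have hDv : D v = C v - 2 := by
      rw [hD, Function.update_of_ne hadj.ne, Function.update_self]
    have hDc : D c = C c + 1 := by simp [hD]
    have hDw : ∀ w, w ≠ v → w ≠ c → D w = C w := fun w h1 h2 => by
      rw [hD, Function.update_of_ne h2, Function.update_of_ne h1]
    have hsum : ∑ w ∈ S.erase v, D w / 2 = ∑ w ∈ S.erase v, C w / 2 := by
      refine Finset.sum_congr rfl fun w hw => ?_
      rw [Finset.mem_erase] at hw
      rw [hDw w hw.1 (fun h => hcS (h ▸ hw.2))]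
    have h1 := Finset.add_sum_erase S (fun w => C w / 2) hv
    have h2 := Finset.add_sum_erase S (fun w => D w / 2) hv
    obtain ⟨C', hr, hc, hw⟩ := ih D (by omega)
    refine ⟨C', .head (PebStep.of_adj hadj C (by omega)) hr, by omega, fun w h1 h2 => ?_⟩
    rw [hw w h1 h2, hDw w (fun h => h1 (h ▸ hv)) h2]

/-- Pebbles can be moved to `r` through a common neighbor `c`. -/
theorem exists_collect_via {V : Type} [DecidableEq V] {G : SimpleGraph V} {c r : V}
    {S : Finset V} (hS : ∀ v ∈ S, G.Adj v c) (hr : r ∉ S) (hcr : G.Adj c r) (m : ℕ)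
    (C : V → ℕ) (hC : 2 * m ≤ C c + ∑ v ∈ S, C v / 2) :
    ∃ C', Relation.ReflTransGen (PebStep G) C C' ∧ C r + m ≤ C' r := by
  obtain ⟨C₁, h₁, hc, hw⟩ := exists_collect hS _ C le_rfl
  obtain ⟨C₂, h₂, hc₂, -⟩ := exists_collect (S := {c}) (c := r) (by simpa using hcr) m C₁
    (by rw [Finset.sum_singleton]; omega)
  exact ⟨C₂, h₁.trans h₂, by rw [hc₂, hw r hr hcr.ne']⟩

/-- A pair of pebbles can be sent along a path whose other vertices carry odd numbers of
pebbles, delivering a pebble to the end at the cost of a single pair. -/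
theorem exists_send_along {V : Type} [DecidableEq V] {G : SimpleGraph V} {S : Finset V}
    {x r : V} (p : G.Walk x r) :
    p.IsPath → r ∉ S → (∀ v ∈ p.support, v ≠ r → v ∈ S) → x ≠ r → ∀ C : V → ℕ, 2 ≤ C x →
      (∀ v ∈ p.support, v ≠ x → v ≠ r → Odd (C v)) →
      ∃ C', Relation.ReflTransGen (PebStep G) C C' ∧ C r + 1 ≤ C' r ∧
        ∑ v ∈ S, C v / 2 ≤ ∑ v ∈ S, C' v / 2 + 1 := by
  induction p with
  | nil => exact fun _ _ _ h => absurd rfl h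
  | @cons x y r h q ih =>
    intro hp hrS hpS hxr C hCx hodd
    rw [SimpleGraph.Walk.cons_isPath_iff] at hp
    obtain ⟨hq, hxq⟩ := hp
    have hxS : x ∈ S := hpS x (by simp) hxr
    set D := Function.update (Function.update C x (C x - 2)) y (C y + 1) with hD
    have hDx : D x = C x - 2 := by
      rw [hD, Function.update_of_ne h.ne, Function.update_self]
    have hDy : D y = C y + 1 := by simp [hD]
    have hDw : ∀ w, w ≠ x → w ≠ y → D w = C w := fun w h1 h2 => by
      rw [hD, Function.update_of_ne h2, Function.update_of_ne h1]
    have hstep : PebStep G C D := PebStep.of_adj h C hCx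
    have h1 := Finset.add_sum_erase S (fun w => C w / 2) hxS
    have h2 := Finset.add_sum_erase S (fun w => D w / 2) hxS
    by_cases hyr : y = r
    · subst hyr
      refine ⟨D, .single hstep, hDy.ge, ?_⟩
      have h3 : ∑ w ∈ S.erase x, D w / 2 = ∑ w ∈ S.erase x, C w / 2 := by
        refine Finset.sum_congr rfl fun w hw => ?_
        rw [Finset.mem_erase] at hw
        rw [hDw w hw.1 (fun h => hrS (h ▸ hw.2))]
      omega
    · have hyodd : Odd (C y) := hodd y (by simp) h.ne' hyr
      obtain ⟨j, hj⟩ := hyodd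
      have hyS : y ∈ S.erase x := Finset.mem_erase.2 ⟨h.ne', hpS y (by simp) hyr⟩
      have h3 := Finset.add_sum_erase (S.erase x) (fun w => C w / 2) hyS
      have h4 := Finset.add_sum_erase (S.erase x) (fun w => D w / 2) hyS
      have h5 : ∑ w ∈ (S.erase x).erase y, D w / 2 = ∑ w ∈ (S.erase x).erase y, C w / 2 := by
        refine Finset.sum_congr rfl fun w hw => ?_
        rw [Finset.mem_erase, Finset.mem_erase] at hw
        rw [hDw w hw.2.1 hw.1]
      obtain ⟨C', hr, hr1, hs⟩ := ih hq hrS (fun v hv => hpS v (by simp [hv])) hyr D (by omega)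
        (fun v hv hvy hvr => by
          have hvx : v ≠ x := by rintro rfl; exact hxq hv
          rw [hDw v hvx hvy]
          exact hodd v (by simp [hv]) hvx hvr)
      refine ⟨C', .head hstep hr, ?_, by omega⟩
      rwa [hDw r hxr.symm (Ne.symm hyr)] at hr1

/-- A weight function that no pebbling step increases. -/
theorem sum_weight_le_of_pebStep {V : Type} [Fintype V] {G : SimpleGraph V}
    (φ : V → ℕ → ℕ)
    (hφ : ∀ u v, G.Adj u v → ∀ a b, φ u a + φ v (b + 1) ≤ φ u (a + 2) + φ v b)
    {C C' : V → ℕ} (h : Relation.ReflTransGen (PebStep G) C C') :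
    ∑ v, φ v (C' v) ≤ ∑ v, φ v (C v) := by
  classical
  induction h with
  | refl => exact le_rfl
  | @tail A B _ hs ih =>
    refine le_trans ?_ ih
    obtain ⟨u, v, hadj, -, hu, hv, hw⟩ := hs
    have hvu : v ∈ Finset.univ.erase u := by simp [hadj.ne']
    have e1 := Finset.add_sum_erase Finset.univ (fun w => φ w (A w)) (Finset.mem_univ u)
    have e2 := Finset.add_sum_erase Finset.univ (fun w => φ w (B w)) (Finset.mem_univ u)
    have e3 := Finset.add_sum_erase _ (fun w => φ w (A w)) hvu
    have e4 := Finset.add_sum_erase _ (fun w => φ w (B w)) hvu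
    have e5 : ∑ w ∈ (Finset.univ.erase u).erase v, φ w (B w) =
        ∑ w ∈ (Finset.univ.erase u).erase v, φ w (A w) := by
      refine Finset.sum_congr rfl fun w hw' => ?_
      rw [Finset.mem_erase, Finset.mem_erase] at hw'
      rw [hw w hw'.2.1 hw'.1]
    have := hφ u v hadj (B u) (A v)
    rw [hv] at e4
    rw [hu] at this
    omega

/-- A vertex with `k` non-neighbors, `k > 0`, forces `π_t ≥ 4t + k - 1`. -/
theorem exists_not_tSolvable_of_not_adj {V : Type} [Fintype V] {G : SimpleGraph V} {r w : V}
    (hwr : w ≠ r) (hw : ¬ G.Adj r w) {t : ℕ} (ht : 1 ≤ t) :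
    ∃ C : V → ℕ, ∑ v, C v = 4 * t - 2 + {v | v ≠ r ∧ ¬ G.Adj r v}.ncard ∧
      ¬ TSolvable G C r t := by
  classical
  refine ⟨fun v => (if v = w then 4 * t - 2 else 0) + (if v ≠ r ∧ ¬ G.Adj r v then 1 else 0),
    ?_, ?_⟩
  · rw [Finset.sum_add_distrib, Finset.sum_ite_eq', if_pos (Finset.mem_univ _),
      Finset.sum_boole, Set.ncard_eq_toFinset_card']
    simp
  · rintro ⟨C', hr, ht'⟩
    let φ : V → ℕ → ℕ := fun v a =>
      if v = r then 4 * a else if G.Adj r v then 2 * a else 2 * (a / 2)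
    have hmono := sum_weight_le_of_pebStep φ (by
      intro u v huv a b
      simp only [φ]
      by_cases hu : u = r
      · subst hu
        have := huv.ne'
        simp only [if_true, if_neg this, if_pos huv]
        omega
      · by_cases hv : v = r
        · subst hv
          have := huv.symm
          simp only [if_neg hu, if_true, if_pos this]
          omega
        · simp only [if_neg hu, if_neg hv]
          split_ifs <;> omega) hr
    have hle : φ r (C' r) ≤ ∑ v, φ v (C' v) :=
      Finset.single_le_sum (f := fun v => φ v (C' v)) (fun _ _ => Nat.zero_le _)
        (Finset.mem_univ r)
    have hφr : φ r (C' r) = 4 * C' r := by simp [φ]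
    have hinit : ∑ v, φ v ((if v = w then 4 * t - 2 else 0) +
        if v ≠ r ∧ ¬ G.Adj r v then 1 else 0) = 4 * t - 2 := by
      rw [Finset.sum_eq_single w]
      · simp only [φ, if_true, if_neg hwr, if_neg hw, if_pos (And.intro hwr hw)]
        omega
      · intro v _ hv
        by_cases h1 : v = r
        · simp [φ, h1, hwr.symm]
        · by_cases h2 : G.Adj r v <;> simp [φ, h1, h2, hv]
      · simp
    omega

theorem IsTwoTree.tSolvable_of_dominating {V : Type} [Fintype V] {G : SimpleGraph V} (hG : IsTwoTree G)
    {c : V} (hc : ∀ v, v ≠ c → G.Adj v c) {t : ℕ} (ht : 1 ≤ t) (r : V) (C : V → ℕ)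
    (hC : 4 * t + Fintype.card V ≤ ∑ v, C v + 4) : TSolvable G C r t := by
  classical
  by_cases hrc : r = c
  · subst hrc
    have e1 := Finset.add_sum_erase Finset.univ C (Finset.mem_univ r)
    have e2 : ∑ v ∈ Finset.univ.erase r, C v ≤
        2 * ∑ v ∈ Finset.univ.erase r, C v / 2 + (Finset.univ.erase r).card := by
      rw [Finset.mul_sum, Finset.card_eq_sum_ones, ← Finset.sum_add_distrib]
      exact Finset.sum_le_sum fun v _ => by omega
    have e3 := Finset.card_erase_of_mem (Finset.mem_univ r)
    have e4 : 0 < Fintype.card V := Fintype.card_pos_iff.2 ⟨r⟩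
    rw [Finset.card_univ] at e3
    obtain ⟨C', hr, hc', -⟩ := exists_collect (c := r) (S := Finset.univ.erase r)
      (fun v hv => hc v (Finset.ne_of_mem_erase hv)) _ C le_rfl
    exact ⟨C', hr, by omega⟩
  · have hcr : G.Adj c r := (hc r hrc).symm
    set S := (Finset.univ.erase c).erase r with hSdef
    have hrU : r ∈ Finset.univ.erase c := by simp [hrc]
    have hmem : ∀ v, v ∈ S ↔ v ≠ r ∧ v ≠ c := by simp [hSdef]
    have hS : ∀ v ∈ S, G.Adj v c := fun v hv => hc v ((hmem v).1 hv).2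
    have hrS : r ∉ S := by simp [hSdef]
    have e1 := Finset.add_sum_erase Finset.univ C (Finset.mem_univ c)
    have e2 := Finset.add_sum_erase _ C hrU
    have e3 := Finset.card_erase_of_mem (Finset.mem_univ c)
    have e4 := Finset.card_erase_of_mem hrU
    have e5 : 0 < (Finset.univ.erase c).card := Finset.card_pos.2 ⟨r, hrU⟩
    rw [Finset.card_univ] at e3
    rw [← hSdef] at e2 e4
    have e6 : ∑ v ∈ S, C v = 2 * ∑ v ∈ S, C v / 2 + ∑ v ∈ S, C v % 2 := by
      rw [Finset.mul_sum, ← Finset.sum_add_distrib]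
      exact Finset.sum_congr rfl fun v _ => by omega
    have e7 : ∑ v ∈ S, C v % 2 ≤ S.card := by
      rw [Finset.card_eq_sum_ones]
      exact Finset.sum_le_sum fun v _ => by omega
    by_cases hcase : 2 * t ≤ C c + ∑ v ∈ S, C v / 2 + 2 * C r
    · obtain ⟨C', hr, h⟩ := exists_collect_via hS hrS hcr (t - C r) C (by omega)
      exact ⟨C', hr, by omega⟩
    have hodd : ∀ v ∈ S, Odd (C v) := by
      by_contra! hcon
      obtain ⟨v, hv, hv'⟩ := hcon
      have : ∑ v ∈ S, C v % 2 < ∑ v ∈ S, 1 := by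
        refine Finset.sum_lt_sum (fun v _ => by omega) ⟨v, hv, ?_⟩
        rw [Nat.odd_iff] at hv'
        omega
      rw [← Finset.card_eq_sum_ones] at this
      omega
    obtain ⟨z, hz, hz2⟩ : ∃ z ∈ S, C z / 2 ≠ 0 := by
      apply Finset.exists_ne_zero_of_sum_ne_zero; omega
    obtain ⟨hzr, hzc⟩ := (hmem z).1 hz
    obtain ⟨p, hp⟩ := hG.exists_walk_avoiding {c} Set.subsingleton_singleton z r
      (by simpa using hzc) (by simpa using hrc)
    have hpS : ∀ v ∈ p.bypass.support, v ≠ r → v ∈ S := fun v hv hvr =>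
      (hmem v).2 ⟨hvr, hp v (p.support_bypass_subset_support hv)⟩
    obtain ⟨C₁, h₁, hr₁, hs₁⟩ := exists_send_along p.bypass p.bypass_isPath hrS hpS hzr C
      (by omega) (fun v hv _ hvr => hodd v (hpS v hv hvr))
    obtain ⟨C₂, h₂, hr₂⟩ := exists_collect_via hS hrS hcr (t - 1) C₁ (by omega)
    exact ⟨C₂, h₁.trans h₂, by omega⟩

theorem piGt_eq_of_forall_of_exists {V : Type} [Fintype V] {G : SimpleGraph V} {t N : ℕ}
    (hle : ∀ r (C : V → ℕ), N ≤ ∑ v, C v → TSolvable G C r t)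
    (hge : ∃ r, ∃ C : V → ℕ, N ≤ ∑ v, C v + 1 ∧ ¬ TSolvable G C r t) : piGt G t = N := by
  obtain ⟨r, C, hC, hns⟩ := hge
  have : Nonempty V := ⟨r⟩
  have hmem : ∀ r, N ∈ {s | ∀ C : V → ℕ, s ≤ ∑ᶠ v, C v → TSolvable G C r t} := by
    intro r C hC
    rw [finsum_eq_sum_of_fintype] at hC
    exact hle r C hC
  refine le_antisymm (ciSup_le fun r => Nat.sInf_le (hmem r)) ?_
  refine le_trans ?_ (le_ciSup (Set.finite_range fun r => piT G r t).bddAbove r)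
  refine le_csInf ⟨N, hmem r⟩ fun s hs => ?_
  by_contra hlt
  exact hns (hs C (by rw [finsum_eq_sum_of_fintype]; omega))

theorem dist_le_diamG {V : Type} [Finite V] (G : SimpleGraph V) (u v : V) :
    G.dist u v ≤ diamG G :=
  (le_ciSup (f := fun v => G.dist u v) (Set.finite_range _).bddAbove v).trans
    (le_ciSup (f := fun u => eccG G u) (Set.finite_range _).bddAbove u)

/-- The `t`-pebbling number of `K₂` is `2t`. -/
theorem piGt_of_card_eq_two {V : Type} [Fintype V] {G : SimpleGraph V}
    (hcard : Fintype.card V = 2) (hG : ∀ a b, G.Adj a b ↔ a ≠ b) {t : ℕ} (ht : 1 ≤ t) :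
    piGt G t = 2 * t := by
  classical
  have hother : ∀ r : V, ∃ u, u ≠ r ∧ ∀ C : V → ℕ, ∑ v, C v = C r + C u := by
    intro r
    have := Finset.card_erase_of_mem (Finset.mem_univ r)
    rw [Finset.card_univ, hcard] at this
    obtain ⟨u, hu⟩ := Finset.card_eq_one.1 this
    refine ⟨u, ?_, fun C => ?_⟩
    · have : u ∈ Finset.univ.erase r := by rw [hu]; simp
      exact Finset.ne_of_mem_erase this
    · rw [← Finset.add_sum_erase Finset.univ C (Finset.mem_univ r), hu, Finset.sum_singleton]
  apply piGt_eq_of_forall_of_exists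
  · intro r C hC
    obtain ⟨u, hur, hsum⟩ := hother r
    rw [hsum] at hC
    obtain ⟨C', hr, hc, -⟩ := exists_collect (G := G) (c := r) (S := {u})
      (by simpa [hG] using hur) (C u / 2) C (by simp)
    exact ⟨C', hr, by omega⟩
  · obtain ⟨r⟩ : Nonempty V := Fintype.card_pos_iff.1 (by omega)
    obtain ⟨u, hur, hsum⟩ := hother r
    refine ⟨r, fun v => if v = r then 0 else 2 * t - 1, ?_, ?_⟩
    · rw [hsum]; simp only [if_true, if_neg hur]; omega
    · rintro ⟨C', hr, ht'⟩
      have hmono := sum_weight_le_of_pebStep (fun v a => if v = r then 2 * a else a) (by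
        intro u v huv a b
        have := huv.ne
        by_cases hu : u = r
        · subst hu
          simp only [if_true, if_neg this.symm]; omega
        · simp only [if_neg hu]
          split_ifs <;> omega) hr
      rw [hsum, hsum] at hmono
      simp only [if_true, if_neg hur] at hmono
      omega

/-- a 2-path on `n` vertices with diameter `d ≤ 2` has
`π_t(G) = t·2^d + n − 2d`. -/
theorem twoPath_small_diameter_pebbling {V : Type} [Fintype V] (G : SimpleGraph V)
    (hG : IsTwoPath G) (n d t : ℕ) (hn : Fintype.card V = n)
    (hd : d = diamG G) (hd2 : d ≤ 2) (ht : 1 ≤ t) :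
    piGt G t = t * 2 ^ d + n - 2 * d := by
  classical
  obtain ⟨hT, hsimp⟩ := hG
  obtain ⟨s, s', hss', hset⟩ := Set.ncard_eq_two.1 hsimp
  have hsimp' : ∀ v, IsSimplicial G v → v = s ∨ v = s' := fun v hv => by
    have : v ∈ {v | IsSimplicial G v} := hv
    rw [hset] at this
    simpa using this
  have hT' := hT
  cases hT with
  | base _ e h =>
    have hcard : Fintype.card V = 2 := by simpa using Fintype.card_congr e
    have hdist : G.dist s s' = 1 := SimpleGraph.dist_eq_one_iff_adj.2 ((h s s').2 hss')
    have hge : 1 ≤ diamG G := hdist ▸ dist_le_diamG G s s'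
    have : Nonempty V := ⟨s⟩
    have hle : diamG G ≤ 1 := ciSup_le fun u => ciSup_le fun v => by
      by_cases huv : u = v
      · simp [huv]
      · exact (SimpleGraph.dist_eq_one_iff_adj.2 ((h u v).2 huv)).le
    obtain rfl : d = 1 := by omega
    rw [piGt_of_card_eq_two hcard h ht]
    omega
  | extend _ r hdeg hcl hind =>
    have hnadj : ¬ G.Adj s s' := by
      intro hadj
      obtain ⟨w, hw, hws'⟩ : ∃ w, w ≠ s ∧ w ≠ s' := by
        by_contra! hcon
        have hsub : (insert r (G.neighborSet r)).ncard ≤ ({s, s'} : Set V).ncard := by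
          refine Set.ncard_le_ncard (fun x _ => ?_) (Set.toFinite _)
          by_cases hx : x = s
          · simp [hx]
          · simp [hcon x hx]
        rw [Set.ncard_insert_of_notMem (by simp) (Set.toFinite _), hdeg,
          Set.ncard_pair hss'] at hsub
        omega
      obtain ⟨v, hv, h1, h2⟩ := hT'.exists_isSimplicial_ne s s' w hadj hw hws'
      rcases hsimp' v hv with h | h
      · exact h1 h
      · exact h2 h
    have hle : G.dist s s' ≤ d := hd ▸ dist_le_diamG G s s'
    have hne0 : G.dist s s' ≠ 0 := by
      rw [Ne, (hT'.connected s s').dist_eq_zero_iff]; exact hss'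
    have hne1 : G.dist s s' ≠ 1 := by
      rw [Ne, SimpleGraph.dist_eq_one_iff_adj]; exact hnadj
    obtain rfl : d = 2 := by omega
    have hdist : G.dist s s' = 2 := by omega
    obtain ⟨c, hsc, hcs'⟩ : ∃ c, G.Adj s c ∧ G.Adj c s' := by
      obtain ⟨p, hp⟩ := (hT'.connected s s').exists_walk_length_eq_dist
      rw [hdist] at hp
      match p, hp with
      | .cons h1 (.cons h2 .nil), _ => exact ⟨_, h1, h2⟩
    have hc : ∀ v, v ≠ c → G.Adj v c := by
      intro v hv
      by_contra hcon
      obtain ⟨u, hu, -, hcu⟩ :=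
        hT'.exists_isSimplicial_not_adj c v hv (fun h => hcon h.symm)
      rcases hsimp' u hu with rfl | rfl
      · exact hcu hsc.symm
      · exact hcu hcs'
    obtain ⟨w, hwr, hw⟩ : ∃ w, w ≠ r ∧ ¬ G.Adj r w := by
      by_contra! hcon
      refine hnadj ?_
      by_cases hs : s = r
      · subst hs; exact hcon s' hss'.symm
      by_cases hs' : s' = r
      · subst hs'; exact (hcon s hs).symm
      exact hcl (hcon s hs) (hcon s' hs') hss'
    have hcount : {v | v ≠ r ∧ ¬ G.Adj r v}.ncard + 3 = n := by
      have h1 := Set.ncard_add_ncard_compl (insert r (G.neighborSet r))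
      have h2 : (insert r (G.neighborSet r))ᶜ = {v | v ≠ r ∧ ¬ G.Adj r v} := by
        ext v; simp
      rw [Set.ncard_insert_of_notMem (by simp) (Set.toFinite _), hdeg, h2,
        Nat.card_eq_fintype_card, hn] at h1
      omega
    apply piGt_eq_of_forall_of_exists
    · intro r' C hC
      exact hT'.tSolvable_of_dominating hc ht r' C (by omega)
    · obtain ⟨C, hC, hns⟩ := exists_not_tSolvable_of_not_adj hwr hw ht
      exact ⟨r, C, by omega, hns⟩
end

section
/- Let G be a 2-path on n vertices, r a simplicial vertex of G, and d = ecc(r). Then every configuration of size at least 2^d + n − 2d is r-solvable; consequently π_t(G,r) = t·2^d + n − 2d for all t ≥ 1. -/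
open SimpleGraph

section Basics

variable {V : Type} {G : SimpleGraph V} {r : V} {t : ℕ}

theorem TSolvable.mono {C D : V → ℕ} (h : TSolvable G C r t) (hle : ∀ w, C w ≤ D w) :
    TSolvable G D r t := by
  obtain ⟨C', hC, ht⟩ := h
  have hD : D = C + (D - C) := by
    funext w
    have := hle w
    simp only [Pi.add_apply, Pi.sub_apply]
    omega
  refine ⟨C' + (D - C), ?_, ht.trans (by simp)⟩
  rw [hD]
  nth_rewrite 2 [← hD]
  refine Relation.ReflTransGen.lift (fun A => A + (D - C)) ?_ _ _ hC
  rintro A B ⟨u, v, huv, h2, hu, hv, hw⟩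
  refine ⟨u, v, huv, ?_, ?_, ?_, fun w h1 h2 => ?_⟩
  · simp only [Pi.add_apply]; omega
  · simp only [Pi.add_apply]; omega
  · simp only [Pi.add_apply]; omega
  · simp only [Pi.add_apply, hw w h1 h2]

theorem TSolvable.of_root {C : V → ℕ} (h : t ≤ C r) : TSolvable G C r t :=
  ⟨C, Relation.ReflTransGen.refl, h⟩

/-- `l` is a fan over `T`: all its vertices lie outside `T` and are adjacent to `z`,
consecutive vertices are adjacent, the last one is also adjacent to `z'`, and there are no
other edges from `l` to `T`. -/
inductive Fan (G : SimpleGraph V) (T : Finset V) (z z' : V) : List V → Prop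
  | single (c : V) (hc : c ∉ T) (hz : G.Adj c z) (hz' : G.Adj c z')
      (hT : ∀ u ∈ T, G.Adj c u → u = z ∨ u = z') : Fan G T z z' [c]
  | cons (c e : V) (l : List V) (hf : Fan G T z z' (e :: l)) (hc : c ∉ T)
      (hcl : c ∉ e :: l) (hz : G.Adj c z) (he : G.Adj c e)
      (hT : ∀ u ∈ T, G.Adj c u → u = z ∨ u = z') : Fan G T z z' (c :: e :: l)

variable {T : Finset V} {z z' : V} {l : List V}

theorem Fan.not_mem (h : Fan G T z z' l) : ∀ c ∈ l, c ∉ T := by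
  induction h with
  | single c hc => simpa using hc
  | cons c e l _ hc _ _ _ _ ih => exact List.forall_mem_cons.2 ⟨hc, ih⟩

theorem Fan.adj_center (h : Fan G T z z' l) : ∀ c ∈ l, G.Adj c z := by
  induction h with
  | single c _ hz => simpa using hz
  | cons c e l _ _ _ hz _ _ ih => exact List.forall_mem_cons.2 ⟨hz, ih⟩

theorem Fan.eq_of_adj (h : Fan G T z z' l) :
    ∀ c ∈ l, ∀ u ∈ T, G.Adj c u → u = z ∨ u = z' := by
  induction h with
  | single c _ _ _ hT => simpa using hT
  | cons c e l _ _ _ _ _ hT ih => exact List.forall_mem_cons.2 ⟨hT, ih⟩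

theorem Fan.nodup (h : Fan G T z z' l) : l.Nodup := by
  induction h with
  | single c => simp
  | cons c e l _ _ hcl _ _ _ ih => exact List.nodup_cons.2 ⟨hcl, ih⟩

end Basics

section Pebbling

variable {V : Type} [DecidableEq V] {G : SimpleGraph V} {r : V} {t : ℕ}

theorem TSolvable.of_step {D : V → ℕ} {u v : V} (huv : G.Adj u v)
    (h : TSolvable G (D + Pi.single v 1) r t) : TSolvable G (D + Pi.single u 2) r t := by
  obtain ⟨C', hC, ht⟩ := h
  refine ⟨C', Relation.ReflTransGen.head ⟨u, v, huv, ?_, ?_, ?_, fun w h1 h2 => ?_⟩ hC, ht⟩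
  · simp
  · simp [huv.ne]
  · simp [huv.ne']
  · simp [h1, h2]

/-- Moving `k` pebbles along an edge, at the cost of `2 * k` pebbles. -/
theorem TSolvable.of_move {u v : V} (huv : G.Adj u v) (k : ℕ) {D : V → ℕ}
    (h : TSolvable G (D + Pi.single v k) r t) : TSolvable G (D + Pi.single u (2 * k)) r t := by
  induction k generalizing D with
  | zero => simpa using h
  | succ k ih =>
    rw [mul_add, mul_one, Pi.single_add, ← add_assoc]
    refine TSolvable.of_step huv ?_
    rw [add_right_comm]
    refine ih ?_
    rw [add_assoc, ← Pi.single_add, add_comm 1 k]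
    exact h

/-- A multi-step move from every vertex of a list to a common neighbor. -/
theorem TSolvable.of_gather {z : V} (f : V → ℕ) (l : List V) (hl : ∀ c ∈ l, G.Adj c z)
    {D : V → ℕ} (h : TSolvable G (D + Pi.single z (l.map f).sum) r t) :
    TSolvable G (D + (l.map fun c => (Pi.single c (2 * f c) : V → ℕ)).sum) r t := by
  induction l generalizing D with
  | nil => simpa using h
  | cons c l ih =>
    rw [List.map_cons, List.sum_cons, ← add_assoc]
    refine ih (fun x hx => hl x (List.mem_cons_of_mem _ hx)) ?_
    rw [add_right_comm]
    refine TSolvable.of_move (hl c List.mem_cons_self) _ ?_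
    rwa [add_assoc, ← Pi.single_add, add_comm _ (f c), ← List.sum_cons, ← List.map_cons]

theorem List.sum_map_single_apply {l : List V} (hl : l.Nodup) (f : V → ℕ) (w : V) :
    (l.map fun c => (Pi.single c (f c) : V → ℕ)).sum w = if w ∈ l then f w else 0 := by
  induction l with
  | nil => simp
  | cons c l ih =>
    obtain ⟨hc, hl⟩ := List.nodup_cons.1 hl
    rw [List.map_cons, List.sum_cons, Pi.add_apply, ih hl]
    by_cases h : w = c
    · subst h; simp [hc]
    · simp [h]

variable {T : Finset V} {z z' : V} {l : List V}

theorem Fan.disjoint (h : Fan G T z z' l) : Disjoint T l.toFinset := by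
  rw [Finset.disjoint_right]
  intro c hc
  exact h.not_mem c (by simpa using hc)

theorem Fan.card_union (h : Fan G T z z' l) : (T ∪ l.toFinset).card = T.card + l.length := by
  rw [Finset.card_union_of_disjoint h.disjoint, List.toFinset_card_of_nodup h.nodup]

theorem Fan.sum_union (h : Fan G T z z' l) (C : V → ℕ) :
    ∑ v ∈ T ∪ l.toFinset, C v = ∑ v ∈ T, C v + (l.map C).sum := by
  rw [Finset.sum_union h.disjoint, List.sum_toFinset _ h.nodup]

/-- If the first vertex has two pebbles and all the others have one, then a pebble can be
pushed along the fan to `z'`. -/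
theorem Fan.solvable_of_chain {c : V} (h : Fan G T z z' (c :: l)) {D : V → ℕ}
    (hs : TSolvable G (D + Pi.single z' 1) r t) :
    TSolvable G (D + Pi.single c 2 + (l.map fun x => (Pi.single x 1 : V → ℕ)).sum) r t := by
  induction l generalizing c D with
  | nil =>
    cases h with
    | single _ _ _ hz' => simpa using hs.of_step hz'
  | cons e l ih =>
    cases h with
    | cons _ _ _ hf _ _ _ he =>
      rw [List.map_cons, List.sum_cons, add_right_comm]
      refine TSolvable.of_step he ?_
      refine (ih hf hs).mono fun w => le_of_eq ?_
      simp only [Pi.add_apply]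
      have : (Pi.single e 2 : V → ℕ) w = (Pi.single e 1 : V → ℕ) w + (Pi.single e 1 : V → ℕ) w := by
        rw [← Pi.add_apply, ← Pi.single_add]
      omega

theorem Fan.solvable_of_odd (h : Fan G T z z' l) (f : V → ℕ) {D : V → ℕ}
    (hf : 1 ≤ (l.map f).sum)
    (hs : TSolvable G (D + Pi.single z ((l.map f).sum - 1) + Pi.single z' 1) r t) :
    TSolvable G (D + (l.map fun c => (Pi.single c (2 * f c + 1) : V → ℕ)).sum) r t := by
  obtain ⟨c, l, rfl⟩ : ∃ c l', l = c :: l' := by cases h <;> exact ⟨_, _, rfl⟩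
  induction l generalizing c D with
  | nil =>
    have h1 := h.adj_center c (by simp)
    simp only [List.map_cons, List.map_nil, List.sum_cons, List.sum_nil, add_zero] at *
    cases h with
    | single _ _ _ hz' =>
      have := (hs.of_step hz')
      rw [add_right_comm] at this
      refine (this.of_move h1).mono fun w => ?_
      simp only [Pi.add_apply, Pi.single_apply]
      split_ifs <;> omega
  | cons e l ih =>
    have h1 := h.adj_center
    by_cases h0 : f c = 0
    · cases h with
      | cons _ _ _ hfan =>
        rw [List.map_cons, List.sum_cons, h0, zero_add] at hf
        rw [List.map_cons, List.sum_cons, h0, zero_add] at hs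
        rw [List.map_cons, List.sum_cons, ← add_assoc]
        refine ih (D := D + Pi.single c (2 * f c + 1)) e hfan hf (hs.mono fun w => ?_)
        simp only [Pi.add_apply]
        omega
    · have h2 : TSolvable G (D + (Pi.single c 2 +
          ((e :: l).map fun x => (Pi.single x 1 : V → ℕ)).sum) + Pi.single z (f c - 1) +
          Pi.single z ((e :: l).map f).sum) r t := by
        refine (h.solvable_of_chain hs).mono fun w => ?_
        rw [List.map_cons (f := f), List.sum_cons]
        simp only [Pi.add_apply, Pi.single_apply]
        split_ifs <;> omega
      have h3 := h2.of_gather f _ fun x hx => h1 x (List.mem_cons_of_mem _ hx)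
      rw [add_right_comm] at h3
      refine (h3.of_move (h1 c (by simp))).mono fun w => ?_
      obtain ⟨hcl, hn⟩ := List.nodup_cons.1 h.nodup
      have e1 : ((e :: l).map fun x => (Pi.single x 1 : V → ℕ)).sum w =
          if w ∈ e :: l then 1 else 0 := List.sum_map_single_apply hn (fun _ => 1) w
      have e2 := List.sum_map_single_apply hn (fun x => 2 * f x) w
      have e3 := List.sum_map_single_apply hn (fun x => 2 * f x + 1) w
      rw [List.map_cons (a := c), List.sum_cons]
      simp only [Pi.add_apply, e1, e2, e3]
      by_cases hw : w = c
      · subst hw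
        simp only [hcl, Pi.single_eq_same, if_false]
        omega
      · simp only [Pi.single_apply, hw, if_false]
        split_ifs <;> omega

end Pebbling
section UpperBound

theorem List.sum_map_le_length {V : Type} {C : V → ℕ} {l : List V} (h : ∀ c ∈ l, C c ≤ 1) :
    (l.map C).sum ≤ l.length ∧ ((l.map C).sum = l.length → ∀ c ∈ l, C c = 1) := by
  induction l with
  | nil => simp
  | cons c l ih =>
    obtain ⟨h1, h2⟩ := ih fun x hx => h x (List.mem_cons_of_mem _ hx)
    have hc := h c List.mem_cons_self
    rw [List.map_cons, List.sum_cons, List.length_cons]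
    refine ⟨by omega, fun h3 => List.forall_mem_cons.2 ⟨by omega, h2 (by omega)⟩⟩

theorem List.sum_map_eq_two_mul_add {V : Type} (C : V → ℕ) (l : List V) :
    (l.map C).sum = 2 * (l.map fun c => C c / 2).sum + (l.map fun c => C c % 2).sum := by
  induction l with
  | nil => simp
  | cons c l ih =>
    simp only [List.map_cons, List.sum_cons]
    omega

variable {V : Type} [DecidableEq V] {G : SimpleGraph V} {r : V} {t : ℕ}
  {T : Finset V} {z z' : V} {l : List V} {X k : ℕ}

theorem sum_indicator_add_single (hz : z ∈ T) (C : V → ℕ) (m : ℕ) :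
    ∑ v ∈ T, (Set.indicator (T : Set V) C + Pi.single z m : V → ℕ) v = ∑ v ∈ T, C v + m := by
  simp only [Pi.add_apply, Finset.sum_add_distrib]
  congr 1
  · exact Finset.sum_congr rfl fun v hv => by simp [hv]
  · simp [hz]

theorem Fan.solvable_of_le_sum (hf : Fan G T z z' l) (hz : z ∈ T) (hX : 2 ≤ X)
    (hA : ∀ C : V → ℕ, T.card + X ≤ ∑ v ∈ T, C v + k → TSolvable G C r t)
    (hB : ∀ C : V → ℕ, T.card ≤ ∑ v ∈ T, C v + k → TSolvable G (C + Pi.single z (X - 1)) r t ∨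
      TSolvable G (C + Pi.single z (X - 2) + Pi.single z' 1) r t)
    (hW : ∀ C : V → ℕ, X ≤ C z → TSolvable G C r t) (C : V → ℕ)
    (hC : T.card + l.length + 2 * X ≤ ∑ v ∈ T, C v + (l.map C).sum + (k + 2)) :
    TSolvable G C r t := by
  obtain ⟨hs, hodd⟩ := List.sum_map_le_length (C := fun c => C c % 2) (l := l)
    fun c _ => by omega
  have hsum := List.sum_map_eq_two_mul_add C l
  set u := (l.map fun c => C c / 2).sum with hu
  have hgather : TSolvable G (Set.indicator (T : Set V) C + Pi.single z u) r t →
      TSolvable G C r t := fun h => by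
    refine (h.of_gather _ _ hf.adj_center).mono fun w => ?_
    rw [Pi.add_apply, List.sum_map_single_apply hf.nodup fun c => 2 * (C c / 2)]
    by_cases hw : w ∈ l
    · simp only [hw, if_true, Set.indicator_apply, Finset.mem_coe, hf.not_mem w hw, if_false]
      omega
    · simp only [hw, if_false, Set.indicator_apply]
      split_ifs <;> omega
  by_cases h1 : X ≤ u
  · exact hgather (hW _ (by simp; omega))
  by_cases h2 : T.card + X ≤ ∑ v ∈ T, C v + u + k
  · refine hgather (hA _ ?_)
    rw [sum_indicator_add_single hz]
    omega
  have hall := hodd (by omega)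
  have hTu : ∑ v ∈ T, (Set.indicator (T : Set V) C) v = ∑ v ∈ T, C v :=
    Finset.sum_congr rfl fun v hv => by simp [hv]
  have huX : u = X - 1 := by omega
  rcases hB (Set.indicator (T : Set V) C) (by omega) with h | h
  · exact hgather (by rwa [huX])
  · have huX2 : X - 2 = u - 1 := by omega
    rw [huX2] at h
    refine (hf.solvable_of_odd (fun c => C c / 2) (by omega) h).mono fun w => ?_
    rw [Pi.add_apply, List.sum_map_single_apply hf.nodup fun c => 2 * (C c / 2) + 1]
    by_cases hw : w ∈ l
    · have := hall w hw
      simp only [hw, if_true, Set.indicator_apply, Finset.mem_coe, hf.not_mem w hw, if_false]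
      omega
    · simp only [hw, if_false, Set.indicator_apply]
      split_ifs <;> omega

theorem solvable_or_solvable_of_le_sum {a b : V} (hz : z ∈ T) (hX : 2 ≤ X)
    (hlT : ∀ c ∈ l, G.Adj c z) (hab : a ≠ b)
    (haz : G.Adj a z) (hbz : G.Adj b z) (hal : a ∉ l)
    (hA : ∀ C : V → ℕ, T.card + X ≤ ∑ v ∈ T, C v + k → TSolvable G C r t)
    (hB : ∀ C : V → ℕ, T.card ≤ ∑ v ∈ T, C v + k → TSolvable G (C + Pi.single z (X - 1)) r t ∨
      TSolvable G (C + Pi.single z (X - 2) + Pi.single z' 1) r t)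
    (hWz : ∀ C : V → ℕ, X ≤ C z → TSolvable G C r t)
    (hWa : ∀ C : V → ℕ, 2 * X ≤ C a → TSolvable G C r t) (C : V → ℕ)
    (hC : T.card + (l.length + 2) ≤ ∑ v ∈ T, C v + (C a + C b + (l.map C).sum) + (k + 2))
    (hfin : (∀ c ∈ l, C c = 1) →
      TSolvable G (Set.indicator (T : Set V) C + Pi.single z (X - 2) + Pi.single z' 1) r t →
      TSolvable G (C + Pi.single a (2 * X - 1)) r t ∨
      TSolvable G (C + Pi.single a (2 * X - 2) + Pi.single b 1) r t) :
    TSolvable G (C + Pi.single a (2 * X - 1)) r t ∨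
      TSolvable G (C + Pi.single a (2 * X - 2) + Pi.single b 1) r t := by
  by_cases h1 : 1 ≤ C a
  · exact .inl (hWa _ (by simp; omega))
  by_cases h2 : 1 ≤ C b
  · refine .inr ?_
    have h3 : TSolvable G (0 + Pi.single z (X - 1) + Pi.single z 1) r t := hWz _ (by simp; omega)
    have h4 := h3.of_move hbz
    rw [add_right_comm] at h4
    refine (h4.of_move haz).mono fun w => ?_
    simp only [Pi.add_apply, Pi.zero_apply, Pi.single_apply]
    by_cases hw : w = b
    · subst hw; simp [hab.symm]; omega
    · simp only [hw, if_false]; split_ifs <;> omega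
  by_cases h5 : ∃ c ∈ l, 2 ≤ C c
  · obtain ⟨c, hcl, hc⟩ := h5
    refine .inl ?_
    have h3 : TSolvable G (0 + Pi.single z (X - 1) + Pi.single z 1) r t := hWz _ (by simp; omega)
    have h4 := h3.of_move (hlT c hcl)
    rw [add_right_comm] at h4
    refine (h4.of_move haz).mono fun w => ?_
    have hca : c ≠ a := fun h => hal (h ▸ hcl)
    simp only [Pi.add_apply, Pi.zero_apply, Pi.single_apply]
    by_cases hw : w = c
    · subst hw; simp [hca]; omega
    · simp only [hw, if_false]; split_ifs <;> omega
  push Not at h5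
  obtain ⟨h6, h7⟩ := List.sum_map_le_length (C := C) (l := l)
    fun c hc => Nat.le_of_lt_succ (h5 c hc)
  have hmove : TSolvable G (Set.indicator (T : Set V) C + Pi.single z (X - 1)) r t →
      TSolvable G (C + Pi.single a (2 * X - 1)) r t := fun h => by
    refine (h.of_move haz).mono fun w => ?_
    simp only [Pi.add_apply, Pi.single_apply, Set.indicator_apply]
    split_ifs <;> omega
  by_cases h8 : (l.map C).sum = l.length
  · have hTu : ∑ v ∈ T, (Set.indicator (T : Set V) C) v = ∑ v ∈ T, C v :=
      Finset.sum_congr rfl fun v hv => by simp [hv]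
    rcases hB (Set.indicator (T : Set V) C) (by omega) with h | h
    · exact .inl (hmove h)
    · exact hfin (h7 h8) h
  · refine .inl (hmove (hA _ ?_))
    rw [sum_indicator_add_single hz]
    omega

/-- `Layered G r i T a b`: the vertex set `T` is a union of complete distance layers
`0, …, i` from `r`, and the edge `ab` of layer `i` is the one along which `T` gets extended. -/
inductive Layered (G : SimpleGraph V) (r : V) : ℕ → Finset V → V → V → Prop
  | triangle (x y : V) (hx : G.Adj r x) (hy : G.Adj r y) (hxy : G.Adj x y) :
      Layered G r 1 {r, x, y} x y
  | next (i : ℕ) (T : Finset V) (z z' p q : V) (l : List V) (h : Layered G r i T z z')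
      (hf : Fan G T z z' (p :: q :: l)) :
      Layered G r (i + 1) (T ∪ (p :: q :: l).toFinset) p q
  | symm (i : ℕ) (T : Finset V) (a b : V) (h : Layered G r i T a b) : Layered G r i T b a

namespace Layered

variable {i : ℕ} {a b : V}

theorem one_le (h : Layered G r i T a b) : 1 ≤ i := by
  induction h with
  | triangle => exact le_rfl
  | next => omega
  | symm _ _ _ _ _ ih => exact ih

theorem mem (h : Layered G r i T a b) : a ∈ T ∧ b ∈ T := by
  induction h with
  | triangle => simp
  | next => simp
  | symm _ _ _ _ _ ih => exact ih.symm

theorem solvable_of_le_apply (h : Layered G r i T a b) :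
    (∀ C : V → ℕ, t * 2 ^ i ≤ C a → TSolvable G C r t) ∧
      (∀ C : V → ℕ, t * 2 ^ i ≤ C b → TSolvable G C r t) := by
  have key : ∀ {u v : V} {m : ℕ}, G.Adj u v →
      (∀ C : V → ℕ, t * 2 ^ m ≤ C v → TSolvable G C r t) →
      ∀ C : V → ℕ, t * 2 ^ (m + 1) ≤ C u → TSolvable G C r t := by
    intro u v m huv hv C hC
    have h1 : TSolvable G (0 + Pi.single v (t * 2 ^ m)) r t := hv _ (by simp)
    refine (h1.of_move huv).mono fun w => ?_
    rw [pow_succ] at hC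
    simp only [Pi.add_apply, Pi.single_apply, Pi.zero_apply]
    split_ifs with hw
    · subst hw; linarith
    · omega
  induction h with
  | triangle x y hx hy =>
    have h0 : ∀ C : V → ℕ, t * 2 ^ 0 ≤ C r → TSolvable G C r t :=
      fun C hC => .of_root (by simpa using hC)
    exact ⟨key hx.symm h0, key hy.symm h0⟩
  | next i T z z' p q l _ hf ih =>
    exact ⟨key (hf.adj_center p (by simp)) ih.1, key (hf.adj_center q (by simp)) ih.1⟩
  | symm _ _ _ _ _ ih => exact ih.symm

theorem solvable_aux (h : Layered G r i T a b) (ht : 1 ≤ t) :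
    (∀ C : V → ℕ, T.card + t * 2 ^ i ≤ ∑ v ∈ T, C v + 2 * i → TSolvable G C r t) ∧
    (∀ C : V → ℕ, T.card ≤ ∑ v ∈ T, C v + 2 * i →
      TSolvable G (C + Pi.single a (t * 2 ^ i - 1)) r t ∨
      TSolvable G (C + Pi.single a (t * 2 ^ i - 2) + Pi.single b 1) r t) ∧
    (∀ C : V → ℕ, T.card ≤ ∑ v ∈ T, C v + 2 * i →
      TSolvable G (C + Pi.single b (t * 2 ^ i - 1)) r t ∨
      TSolvable G (C + Pi.single b (t * 2 ^ i - 2) + Pi.single a 1) r t) := by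
  induction h with
  | symm _ _ _ _ _ ih => exact ⟨ih.1, ih.2.2, ih.2.1⟩
  | triangle x y hx hy hxy =>
    have hcard : ({r, x, y} : Finset V).card = 3 := Finset.card_eq_three.2
      ⟨r, x, y, hx.ne, hy.ne, hxy.ne, rfl⟩
    have hsum : ∀ C : V → ℕ, ∑ v ∈ ({r, x, y} : Finset V), C v = C r + C x + C y := fun C => by
      rw [Finset.sum_insert (by simp [hx.ne, hy.ne]), Finset.sum_pair hxy.ne, add_assoc]
    have hmove : ∀ (C : V → ℕ), t ≤ C r + C x / 2 + C y / 2 → TSolvable G C r t := by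
      intro C hC
      have h1 : TSolvable G (Pi.single r (C r) + Pi.single r (C y / 2) + Pi.single r (C x / 2))
        r t := .of_root (by simp; omega)
      have h2 := h1.of_move hx.symm
      rw [add_right_comm] at h2
      refine (h2.of_move hy.symm).mono fun w => ?_
      have h3 := hx.ne
      have h4 := hy.ne
      have h5 := hxy.ne
      simp only [Pi.add_apply, Pi.single_apply]
      split_ifs <;> simp_all <;> omega
    have key : ∀ x y : V, G.Adj r x → G.Adj r y → G.Adj x y →
        (∀ (C : V → ℕ), t ≤ C r + C x / 2 + C y / 2 → TSolvable G C r t) →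
        ∀ C : V → ℕ, 1 ≤ C r + C x + C y →
        TSolvable G (C + (Pi.single x (t * 2 ^ 1 - 1) : V → ℕ)) r t ∨
        TSolvable G (C + (Pi.single x (t * 2 ^ 1 - 2) : V → ℕ) + (Pi.single y 1 : V → ℕ)) r t := by
      intro x y hx hy hxy hmove C hC
      by_cases h1 : 1 ≤ C y
      · refine .inr (hmove _ ?_)
        simp [hx.ne, hy.ne, hxy.ne, hxy.ne']
        omega
      · refine .inl (hmove _ ?_)
        simp [hx.ne, hxy.ne']
        omega
    rw [hcard]
    simp only [hsum]
    refine ⟨fun C hC => hmove C (by omega), fun C hC => key x y hx hy hxy hmove C (by omega),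
      fun C hC => key y x hy hx hxy.symm (fun C hC => hmove C (by omega)) C (by omega)⟩
  | next i T z z' p q l h hf ih =>
    obtain ⟨hA, hB, -⟩ := ih
    have hX : 2 ≤ t * 2 ^ i := by
      have := h.one_le
      calc 2 = 1 * 2 ^ 1 := by norm_num
        _ ≤ t * 2 ^ i := Nat.mul_le_mul ht (Nat.pow_le_pow_right (by norm_num) this)
    have hWz : ∀ C : V → ℕ, t * 2 ^ i ≤ C z → TSolvable G C r t := h.solvable_of_le_apply.1
    have hX2 : t * 2 ^ (i + 1) = 2 * (t * 2 ^ i) := by ring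
    have hW := (h.next _ _ _ _ _ _ _ hf).solvable_of_le_apply (t := t)
    rw [hX2] at hW ⊢
    rw [hf.card_union]
    simp only [hf.sum_union]
    have hadj := hf.adj_center
    have hmem := hf.not_mem
    have hnd := hf.nodup
    simp only [List.nodup_cons, List.mem_cons, not_or] at hnd
    obtain ⟨⟨hpq, hpl⟩, hql, hnl⟩ := hnd
    have hind : ∀ C : V → ℕ, (∀ c ∈ l, C c = 1) → ∀ w, Set.indicator (T : Set V) C w +
        (l.map fun x => (Pi.single x 1 : V → ℕ)).sum w ≤ C w := by
      intro C hC w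
      rw [List.sum_map_single_apply hnl fun _ => 1]
      by_cases hw : w ∈ l
      · have := hC w hw
        have := hmem w (by simp [hw])
        simp_all
      · simp only [Set.indicator_apply, hw, if_false]
        split_ifs <;> omega
    refine ⟨fun C hC => hf.solvable_of_le_sum h.mem.1 hX hA hB hWz C hC, fun C hC => ?_,
      fun C hC => ?_⟩
    · refine solvable_or_solvable_of_le_sum (l := l) h.mem.1 hX (fun c hc => hadj c (by simp [hc]))
        hpq (hadj p (by simp)) (hadj q (by simp)) hpl
        hA hB hWz hW.1 C ?_ fun hl hs => .inr ?_
      · simp only [List.map_cons, List.sum_cons, List.length_cons] at hC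
        omega
      · refine ((hf.solvable_of_chain hs).mono fun w => ?_ :
          TSolvable G (Set.indicator (T : Set V) C + Pi.single p 2 + Pi.single q 1 +
            (l.map fun x => (Pi.single x 1 : V → ℕ)).sum + Pi.single z (t * 2 ^ i - 2))
            r t).of_move (hadj p (by simp)) |>.mono fun w => ?_
        · simp only [Pi.add_apply, List.map_cons, List.sum_cons]
          omega
        · have := hind C hl w
          simp only [Pi.add_apply, Pi.single_apply]
          split_ifs <;> omega
    · refine solvable_or_solvable_of_le_sum (l := l) h.mem.1 hX (fun c hc => hadj c (by simp [hc]))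
        (Ne.symm hpq) (hadj q (by simp)) (hadj p (by simp))
        hql hA hB hWz hW.2 C ?_ fun hl hs => .inl ?_
      · simp only [List.map_cons, List.sum_cons, List.length_cons] at hC
        omega
      · cases hf with
        | cons _ _ _ hf' =>
        refine ((hf'.solvable_of_chain hs).mono fun w => ?_ :
          TSolvable G (Set.indicator (T : Set V) C + Pi.single q 2 +
            (l.map fun x => (Pi.single x 1 : V → ℕ)).sum + Pi.single z (t * 2 ^ i - 2))
            r t).of_move (hadj q (by simp)) |>.mono fun w => ?_
        · simp only [Pi.add_apply]
          omega
        · have := hind C hl w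
          simp only [Pi.add_apply, Pi.single_apply]
          split_ifs <;> omega

theorem solvable_of_fan (h : Layered G r i T a b) (hf : Fan G T a b l) (ht : 1 ≤ t) (C : V → ℕ)
    (hC : (T ∪ l.toFinset).card + t * 2 ^ (i + 1) ≤
      ∑ v ∈ T ∪ l.toFinset, C v + 2 * (i + 1)) : TSolvable G C r t := by
  obtain ⟨hA, hB, -⟩ := h.solvable_aux ht
  have hX : 2 ≤ t * 2 ^ i := by
    have := h.one_le
    calc 2 = 1 * 2 ^ 1 := by norm_num
      _ ≤ t * 2 ^ i := Nat.mul_le_mul ht (Nat.pow_le_pow_right (by norm_num) this)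
  have hX2 : t * 2 ^ (i + 1) = 2 * (t * 2 ^ i) := by ring
  rw [hf.card_union, hf.sum_union, hX2] at hC
  exact hf.solvable_of_le_sum h.mem.1 hX hA hB h.solvable_of_le_apply.1 C hC

end Layered

end UpperBound
section Simplicial

variable {V : Type} {G : SimpleGraph V} {S : Finset V} {v : V}

/-- The vertex `v` is simplicial in the subgraph induced by `S`. -/
def IsSimplicialOn (G : SimpleGraph V) (S : Finset V) (v : V) : Prop :=
  v ∈ S ∧ ∀ a ∈ S, ∀ b ∈ S, G.Adj v a → G.Adj v b → a ≠ b → G.Adj a b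

theorem IsSimplicialOn.mono {S' : Finset V} (h : IsSimplicialOn G S v) (hv : v ∈ S')
    (hS : S' ⊆ S) : IsSimplicialOn G S' v :=
  ⟨hv, fun a ha b hb => h.2 a (hS ha) b (hS hb)⟩

end Simplicial

section TwoTree

variable {V : Type} [DecidableEq V] {G : SimpleGraph V} {S : Finset V} {r s u v w : V}

/-- The vertex set `S` induces a 2-tree in `G`. -/
inductive IsTwoTreeOn (G : SimpleGraph V) : Finset V → Prop
  | base (a b : V) (hab : G.Adj a b) : IsTwoTreeOn G {a, b}
  | extend (S : Finset V) (v a b : V) (h : IsTwoTreeOn G S) (hv : v ∉ S) (ha : a ∈ S)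
      (hb : b ∈ S) (hab : G.Adj a b) (hva : G.Adj v a) (hvb : G.Adj v b)
      (hN : ∀ u ∈ S, G.Adj v u → u = a ∨ u = b) : IsTwoTreeOn G (insert v S)

theorem IsTwoTreeOn.map {W : Type} [DecidableEq W] {H : SimpleGraph W} {S : Finset W}
    (f : H ↪g G) (h : IsTwoTreeOn H S) : IsTwoTreeOn G (S.map f.toEmbedding) := by
  induction h with
  | base a b hab =>
    rw [Finset.map_insert, Finset.map_singleton]
    exact .base _ _ (f.map_adj_iff.2 hab)
  | extend S v a b _ hv ha hb hab hva hvb hN ih =>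
    rw [Finset.map_insert]
    refine .extend _ _ (f a) (f b) ih ?_ ?_ ?_ (f.map_adj_iff.2 hab) (f.map_adj_iff.2 hva)
      (f.map_adj_iff.2 hvb) ?_
    · simpa using hv
    · exact Finset.mem_map_of_mem _ ha
    · exact Finset.mem_map_of_mem _ hb
    · intro u hu huv
      obtain ⟨u, hu', rfl⟩ := Finset.mem_map.1 hu
      exact (hN u hu' (f.map_adj_iff.1 huv)).imp (congrArg f) (congrArg f)

theorem IsTwoTree.isTwoTreeOn {V : Type} {G : SimpleGraph V} (h : IsTwoTree G) :
    ∀ [DecidableEq V] (S : Finset V), (∀ v, v ∈ S) → IsTwoTreeOn G S := by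
  induction h with
  | base G e h =>
    intro _ S hS
    have : S = {e.symm 0, e.symm 1} := by
      ext v
      have : e v = 0 ∨ e v = 1 := by
        generalize e v = i
        fin_cases i <;> simp
      simp [hS v, Equiv.eq_symm_apply, this]
    rw [this]
    exact .base _ _ ((h _ _).2 (by simp))
  | extend G v hdeg hcl _ ih =>
    intro _ S hS
    obtain ⟨a, b, hab, hN⟩ := Set.ncard_eq_two.1 hdeg
    have hN' : ∀ u, G.Adj v u ↔ u = a ∨ u = b := fun u => by
      rw [← G.mem_neighborSet, hN]; rfl
    have hva := (hN' a).2 (.inl rfl)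
    have hvb := (hN' b).2 (.inr rfl)
    have h1 := (ih (S.subtype (· ∈ {u | u ≠ v})) fun u => by simpa using hS u).map
      (SimpleGraph.Embedding.induce (G := G) {u | u ≠ v})
    have h2 := h1.extend _ v a b (by simp) (by simp [hS, hva.ne'])
      (by simp [hS, hvb.ne']) (hcl hva hvb hab) hva hvb fun u _ hu => (hN' u).1 hu
    convert h2
    ext u
    by_cases hu : u = v <;> simp [hS, hu]

namespace IsTwoTreeOn

theorem two_le_card (h : IsTwoTreeOn G S) : 2 ≤ S.card := by
  induction h with
  | base a b hab => rw [Finset.card_pair hab.ne]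
  | extend S v a b _ hv _ _ _ _ _ _ ih => rw [Finset.card_insert_of_notMem hv]; omega

theorem exists_adj (h : IsTwoTreeOn G S) : ∀ v ∈ S, ∃ u ∈ S, G.Adj v u := by
  induction h with
  | base a b hab =>
    intro v hv
    rcases Finset.mem_insert.1 hv with rfl | hv
    · exact ⟨b, by simp, hab⟩
    · rw [Finset.mem_singleton.1 hv]
      exact ⟨a, by simp, hab.symm⟩
  | extend S w a b _ hw ha _ _ hwa _ _ ih =>
    intro v hv
    rcases Finset.mem_insert.1 hv with rfl | hv
    · exact ⟨a, Finset.mem_insert_of_mem ha, hwa⟩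
    · obtain ⟨u, hu, h⟩ := ih v hv
      exact ⟨u, Finset.mem_insert_of_mem hu, h⟩

theorem eq_pair (h : IsTwoTreeOn G S) (hS : S.card = 2) (hu : u ∈ S) (hv : v ∈ S)
    (huv : u ≠ v) : S = {u, v} ∧ G.Adj u v := by
  have h1 : S = {u, v} := (Finset.eq_of_subset_of_card_le
    (Finset.insert_subset hu (Finset.singleton_subset_iff.2 hv))
    (by rw [hS, Finset.card_pair huv])).symm
  refine ⟨h1, ?_⟩
  obtain ⟨w, hw, hadj⟩ := h.exists_adj u hu
  rw [h1] at hw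
  rcases Finset.mem_insert.1 hw with rfl | hw
  · exact absurd hadj (G.irrefl)
  · rwa [← Finset.mem_singleton.1 hw]

end IsTwoTreeOn

theorem IsSimplicialOn.insert_of_not_adj (h : IsSimplicialOn G S v) (hw : ¬ G.Adj v w) :
    IsSimplicialOn G (insert w S) v := by
  refine ⟨Finset.mem_insert_of_mem h.1, fun a ha b hb hva hvb hab => ?_⟩
  rcases Finset.mem_insert.1 ha with rfl | ha
  · exact absurd hva hw
  rcases Finset.mem_insert.1 hb with rfl | hb
  · exact absurd hvb hw
  exact h.2 a ha b hb hva hvb hab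

theorem IsSimplicialOn.not_adj_of_insert {a b x y : V} (hv : IsSimplicialOn G (insert w S) v)
    (hw : w ∉ S) (hN : ∀ u ∈ S, G.Adj w u → u = a ∨ u = b) (hvS : v ∈ S) (hx : x ∈ S)
    (hy : y ∈ S) (hxy : G.Adj x y) (hvx : G.Adj v x) (hvy : G.Adj v y) : ¬ G.Adj v w := by
  intro hvw
  have hwx := hv.2 w (by simp) x (Finset.mem_insert_of_mem hx) hvw hvx fun e => hw (e ▸ hx)
  have hwy := hv.2 w (by simp) y (Finset.mem_insert_of_mem hy) hvw hvy fun e => hw (e ▸ hy)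
  have h1 := hN x hx hwx
  have h2 := hN y hy hwy
  have h3 := hN v hvS hvw.symm
  have := hxy.ne
  have := hvx.ne
  have := hvy.ne
  grind

theorem isSimplicialOn_insert {a b : V} (hab : G.Adj a b)
    (hN : ∀ u ∈ S, G.Adj v u → u = a ∨ u = b) : IsSimplicialOn G (insert v S) v := by
  refine ⟨Finset.mem_insert_self _ _, fun x hx y hy hvx hvy hxy => ?_⟩
  have h1 := hN x (Finset.mem_of_mem_insert_of_ne hx hvx.ne') hvx
  have h2 := hN y (Finset.mem_of_mem_insert_of_ne hy hvy.ne') hvy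
  rcases h1 with rfl | rfl <;> rcases h2 with rfl | rfl
  · exact absurd rfl hxy
  · exact hab
  · exact hab.symm
  · exact absurd rfl hxy

namespace IsTwoTreeOn

/-- A simplicial vertex of a 2-tree has exactly two neighbors, and they are adjacent. -/
theorem exists_of_isSimplicialOn (h : IsTwoTreeOn G S) (hS : 3 ≤ S.card)
    (hv : IsSimplicialOn G S v) :
    ∃ a ∈ S, ∃ b ∈ S, G.Adj a b ∧ G.Adj v a ∧ G.Adj v b ∧
      ∀ u ∈ S, G.Adj v u → u = a ∨ u = b := by
  induction h generalizing v with
  | base a b hab => rw [Finset.card_pair hab.ne] at hS; omega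
  | extend S w a b h hw ha hb hab hwa hwb hN ih =>
    by_cases hvw : v = w
    · subst hvw
      exact ⟨a, Finset.mem_insert_of_mem ha, b, Finset.mem_insert_of_mem hb, hab, hwa, hwb,
        fun u hu hvu => hN u (Finset.mem_of_mem_insert_of_ne hu hvu.ne') hvu⟩
    have hvS : v ∈ S := Finset.mem_of_mem_insert_of_ne hv.1 hvw
    rw [Finset.card_insert_of_notMem hw] at hS
    by_cases hS2 : S.card = 2
    · obtain ⟨rfl, -⟩ := h.eq_pair hS2 ha hb hab.ne
      rcases Finset.mem_insert.1 hvS with rfl | hvS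
      · refine ⟨w, by simp, b, by simp, hwb, hwa.symm, hab, fun u hu hvu => ?_⟩
        simp only [Finset.mem_insert, Finset.mem_singleton] at hu
        rcases hu with rfl | rfl | rfl
        · exact .inl rfl
        · exact absurd hvu G.irrefl
        · exact .inr rfl
      · obtain rfl := Finset.mem_singleton.1 hvS
        refine ⟨w, by simp, a, by simp, hwa, hwb.symm, hab.symm, fun u hu hvu => ?_⟩
        simp only [Finset.mem_insert, Finset.mem_singleton] at hu
        rcases hu with rfl | rfl | rfl
        · exact .inl rfl
        · exact .inr rfl
        · exact absurd hvu G.irrefl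
    · obtain ⟨x, hx, y, hy, hxy, hvx, hvy, hN'⟩ :=
        ih (by omega) (hv.mono hvS (Finset.subset_insert _ _))
      have hwv := hv.not_adj_of_insert hw hN hvS hx hy hxy hvx hvy
      refine ⟨x, Finset.mem_insert_of_mem hx, y, Finset.mem_insert_of_mem hy, hxy, hvx, hvy,
        fun u hu hvu => ?_⟩
      rcases Finset.mem_insert.1 hu with rfl | hu
      · exact absurd hvu hwv
      · exact hN' u hu hvu

theorem not_adj_of_extend (h : IsTwoTreeOn G S) (hS : 3 ≤ S.card) (hw : w ∉ S) {a b : V}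
    (hN : ∀ u ∈ S, G.Adj w u → u = a ∨ u = b)
    (hvS : v ∈ S) (hv : IsSimplicialOn G (insert w S) v) : ¬ G.Adj v w := by
  obtain ⟨x, hx, y, hy, hxy, hvx, hvy, -⟩ :=
    h.exists_of_isSimplicialOn hS (hv.mono hvS (Finset.subset_insert _ _))
  exact hv.not_adj_of_insert hw hN hvS hx hy hxy hvx hvy

theorem erase (h : IsTwoTreeOn G S) (hS : 3 ≤ S.card) (hv : IsSimplicialOn G S v) :
    IsTwoTreeOn G (S.erase v) := by
  induction h with
  | base a b hab => rw [Finset.card_pair hab.ne] at hS; omega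
  | extend S w a b h hw ha hb hab hwa hwb hN ih =>
    by_cases hvw : v = w
    · subst hvw
      rwa [Finset.erase_insert hw]
    have hvS : v ∈ S := Finset.mem_of_mem_insert_of_ne hv.1 hvw
    rw [Finset.card_insert_of_notMem hw] at hS
    by_cases hS2 : S.card = 2
    · obtain ⟨rfl, -⟩ := h.eq_pair hS2 ha hb hab.ne
      rcases Finset.mem_insert.1 hvS with rfl | hvS
      · convert base w b hwb using 1
        ext u
        have := hab.ne
        simp only [Finset.mem_erase, Finset.mem_insert, Finset.mem_singleton]
        grind
      · obtain rfl := Finset.mem_singleton.1 hvS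
        convert base w a hwa using 1
        ext u
        have := hab.ne
        simp only [Finset.mem_erase, Finset.mem_insert, Finset.mem_singleton]
        grind
    · have hwv := h.not_adj_of_extend (by omega) hw hN hvS hv
      rw [Finset.erase_insert_of_ne (Ne.symm hvw)]
      refine extend _ _ a b (ih (by omega) (hv.mono hvS (Finset.subset_insert _ _)))
        (fun hh => hw (Finset.mem_of_mem_erase hh))
        (Finset.mem_erase.2 ⟨?_, ha⟩) (Finset.mem_erase.2 ⟨?_, hb⟩) hab hwa hwb
        (fun u hu => hN u (Finset.mem_of_mem_erase hu))
      · rintro rfl; exact hwv hwa.symm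
      · rintro rfl; exact hwv hwb.symm

theorem not_adj_of_isSimplicialOn (h : IsTwoTreeOn G S) (hS : 4 ≤ S.card)
    (hu : IsSimplicialOn G S u) (hv : IsSimplicialOn G S v) : ¬ G.Adj u v := by
  intro huv
  obtain ⟨a, -, b, -, -, -, -, hN⟩ := h.exists_of_isSimplicialOn (by omega) hv
  have hS' : 3 ≤ (S.erase v).card := by rw [Finset.card_erase_of_mem hv.1]; omega
  have h' : IsTwoTreeOn G (S.erase v) := h.erase (by omega) hv
  obtain ⟨p, hp, q, hq, hpq, hup, huq, -⟩ := h'.exists_of_isSimplicialOn hS'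
    (hu.mono (Finset.mem_erase.2 ⟨huv.ne, hu.1⟩) (Finset.erase_subset _ _))
  rw [Finset.mem_erase] at hp hq
  have h1 := hN p hp.2 (hu.2 v hv.1 p hp.2 huv hup hp.1.symm)
  have h2 := hN q hq.2 (hu.2 v hv.1 q hq.2 huv huq hq.1.symm)
  have h3 := hN u hu.1 huv.symm
  have := hpq.ne
  have := hup.ne
  have := huq.ne
  grind

/-- For every edge of a 2-tree there is a simplicial vertex which is not on this edge. -/
theorem exists_isSimplicialOn (h : IsTwoTreeOn G S) (hS : 3 ≤ S.card) (hu : u ∈ S) (hv : v ∈ S)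
    (huv : G.Adj u v) : ∃ w, IsSimplicialOn G S w ∧ w ≠ u ∧ w ≠ v := by
  induction h generalizing u v with
  | base a b hab => rw [Finset.card_pair hab.ne] at hS; omega
  | extend S w a b h hw ha hb hab hwa hwb hN ih =>
    rw [Finset.card_insert_of_notMem hw] at hS
    have key : ∀ x ∈ S, ∃ y, IsSimplicialOn G (insert w S) y ∧ y ≠ w ∧ (G.Adj w x → y ≠ x) := by
      intro x hx
      by_cases hS2 : S.card = 2
      · obtain ⟨rfl, -⟩ := h.eq_pair hS2 ha hb hab.ne
        have hsimp : ∀ y ∈ ({a, b} : Finset V), IsSimplicialOn G (insert w {a, b}) y := by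
          intro y hy
          refine ⟨Finset.mem_insert_of_mem hy, fun c hc e he _ _ hce => ?_⟩
          simp only [Finset.mem_insert, Finset.mem_singleton] at hc he
          rcases hc with rfl | rfl | rfl <;> rcases he with rfl | rfl | rfl <;>
            first
            | exact absurd rfl hce
            | assumption
            | (rw [G.adj_comm]; assumption)
        by_cases hxa : x = a
        · exact ⟨b, hsimp b (by simp), hwb.ne', fun _ => hxa ▸ hab.ne'⟩
        · exact ⟨a, hsimp a (by simp), hwa.ne', fun _ => Ne.symm hxa⟩
      · obtain ⟨y, hy, hya, hyb⟩ := ih (by omega) ha hb hab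
        have hyw : ¬ G.Adj y w := fun hyw => (hN y hy.1 hyw.symm).elim hya hyb
        exact ⟨y, hy.insert_of_not_adj hyw, fun e => hw (e ▸ hy.1), fun hwx e => hyw (e ▸ hwx.symm)⟩
    by_cases huw : u = w
    · subst huw
      obtain ⟨y, h1, h2, h3⟩ := key v (Finset.mem_of_mem_insert_of_ne hv huv.ne')
      exact ⟨y, h1, h2, h3 huv⟩
    by_cases hvw : v = w
    · subst hvw
      obtain ⟨y, h1, h2, h3⟩ := key u (Finset.mem_of_mem_insert_of_ne hu huv.ne)
      exact ⟨y, h1, h3 huv.symm, h2⟩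
    exact ⟨w, isSimplicialOn_insert hab hN, Ne.symm huw, Ne.symm hvw⟩

/-- The layer structure of a 2-path with simplicial vertices `r` and `s`. -/
theorem exists_layered (h : IsTwoTreeOn G S) (hS : 4 ≤ S.card) (hr : IsSimplicialOn G S r)
    (hs : IsSimplicialOn G S s) (hrs : r ≠ s)
    (huniq : ∀ v, IsSimplicialOn G S v → v = r ∨ v = s) :
    ∃ i T z z' l, Layered G r i T z z' ∧ Fan G T z z' (s :: l) ∧
      S = T ∪ (s :: l).toFinset := by
  obtain ⟨n, hn⟩ : ∃ n, S.card = n := ⟨_, rfl⟩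
  induction n generalizing S s with
  | zero => omega
  | succ n ih =>
    obtain ⟨a, ha, b, hb, hab, hsa, hsb, hN⟩ := h.exists_of_isSimplicialOn (by omega) hs
    have hnrs := h.not_adj_of_isSimplicialOn hS hr hs
    have hra : r ≠ a := by rintro rfl; exact hnrs hsa.symm
    have hrb : r ≠ b := by rintro rfl; exact hnrs hsb.symm
    have h' := h.erase (by omega) hs
    have hcard : (S.erase s).card = n := by rw [Finset.card_erase_of_mem hs.1]; omega
    have hins : insert s (S.erase s) = S := Finset.insert_erase hs.1
    have hrS : r ∈ S.erase s := Finset.mem_erase.2 ⟨hrs, hr.1⟩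
    have haS : a ∈ S.erase s := Finset.mem_erase.2 ⟨hsa.ne', ha⟩
    have hbS : b ∈ S.erase s := Finset.mem_erase.2 ⟨hsb.ne', hb⟩
    have hr' : IsSimplicialOn G (S.erase s) r := hr.mono hrS (Finset.erase_subset _ _)
    have hsS : s ∉ S.erase s := Finset.notMem_erase _ _
    have hN' : ∀ u ∈ S.erase s, G.Adj s u → u = a ∨ u = b :=
      fun u hu => hN u (Finset.mem_of_mem_erase hu)
    generalize S.erase s = S' at *
    subst hins
    by_cases hn3 : n = 3
    · have hSe : S' = {r, a, b} := by
        refine (Finset.eq_of_subset_of_card_le ?_ ?_).symm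
        · intro x; simp only [Finset.mem_insert, Finset.mem_singleton]; grind
        · rw [hcard, hn3, Finset.card_eq_three.2 ⟨r, a, b, hra, hrb, hab.ne, rfl⟩]
      obtain ⟨x, hx, y, hy, hxy, hrx, hry, -⟩ := h'.exists_of_isSimplicialOn (by omega) hr'
      have hradj : G.Adj r a ∧ G.Adj r b := by
        rw [hSe] at hx hy
        simp only [Finset.mem_insert, Finset.mem_singleton] at hx hy
        have := hrx.ne
        have := hry.ne
        have := hxy.ne
        grind
      refine ⟨1, S', a, b, [], hSe ▸ .triangle a b hradj.1 hradj.2 hab,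
        .single s hsS hsa hsb hN', ?_⟩
      rw [List.toFinset_cons, List.toFinset_nil, Finset.union_insert, Finset.union_empty]
    have key : ∀ a b : V, a ∈ S' → b ∈ S' → G.Adj a b → G.Adj s a → G.Adj s b → r ≠ a →
        (∀ u ∈ S', G.Adj s u → u = a ∨ u = b) → IsSimplicialOn G S' a →
        ∃ i T z z' l, Layered G r i T z z' ∧ Fan G T z z' (s :: l) ∧
          insert s S' = T ∪ (s :: l).toFinset := by
      intro a b haS hbS hab hsa hsb hra hN' hsimp
      obtain ⟨i, T, z, z', l, hlay, hfan, hSe⟩ := ih h' (by omega) hr' hsimp hra (fun v hv => by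
        by_cases hsv : G.Adj v s
        · rcases hN' v hv.1 hsv.symm with rfl | rfl
          · exact .inr rfl
          · exact absurd hab (h'.not_adj_of_isSimplicialOn (by omega) hsimp hv)
        · rcases huniq v (hv.insert_of_not_adj hsv) with h | rfl
          · exact .inl h
          · exact absurd hv.1 hsS) hcard
      have hsT : s ∉ T := fun hh => hsS (hSe ▸ Finset.mem_union_left _ hh)
      have hsl : s ∉ a :: l := fun hh => hsS (hSe ▸ Finset.mem_union_right _ (by simpa using hh))
      have hTS : T ⊆ S' := hSe ▸ Finset.subset_union_left
      have haT : a ∉ T := hfan.not_mem a (by simp)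
      have hsingle : ∀ z', Layered G r i T b z' → Fan G T b z' (a :: l) →
          ∃ i T z z' l, Layered G r i T z z' ∧ Fan G T z z' (s :: l) ∧
          insert s S' = T ∪ (s :: l).toFinset := fun z' hlay hfan => by
        refine ⟨i, T, b, z', a :: l, hlay, .cons s a l hfan hsT hsl hsb hsa
          fun u hu hsu => ?_, ?_⟩
        · rcases hN' u (hTS hu) hsu with rfl | rfl
          · exact absurd hu haT
          · exact .inl rfl
        · rw [hSe, List.toFinset_cons (a := s), Finset.union_insert]
      obtain ⟨x, -, y, -, -, -, -, hxy⟩ := h'.exists_of_isSimplicialOn (by omega) hsimp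
      have hbxy := hxy b hbS hab
      cases hfan with
      | single _ hc hz hz' hT =>
        have hzx := hxy z (hTS hlay.mem.1) hz
        have hzx' := hxy z' (hTS hlay.mem.2) hz'
        have hbz := hT b
        by_cases hbT : b ∈ T
        · rcases hT b hbT hab with rfl | rfl
          · exact hsingle _ hlay (.single _ hc hz hz' hT)
          · exact hsingle _ hlay.symm (.single _ hc hz' hz fun u hu hau => (hT u hu hau).symm)
        · exfalso
          rw [hSe] at hbS
          simp only [List.toFinset_cons, List.toFinset_nil, Finset.mem_union, Finset.mem_insert,
            Finset.notMem_empty, or_false] at hbS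
          exact hbS.elim hbT hab.ne'
      | cons _ e l hfan' hc hcl hz he hT =>
        have hzx := hxy z (hTS hlay.mem.1) hz
        have hex := hxy e (hSe ▸ Finset.mem_union_right _ (by simp)) he
        have hez : e ≠ z := fun hh => hfan'.not_mem e (by simp) (hh ▸ hlay.mem.1)
        have hbze : b = z ∨ b = e := by grind
        rcases hbze with rfl | rfl
        · exact hsingle _ hlay (.cons _ _ _ hfan' hc hcl hz he hT)
        · refine ⟨i + 1, _, a, b, [], hlay.next _ _ _ _ _ _ _ (.cons _ _ _ hfan' hc hcl hz he hT),
            .single s (hSe ▸ hsS) hsa hsb (hSe ▸ hN'), ?_⟩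
          rw [← hSe]
          rw [List.toFinset_cons, List.toFinset_nil, Finset.union_insert, Finset.union_empty]
    have hrx : ∃ x ∈ S', G.Adj r x := h'.exists_adj r hrS
    obtain ⟨x, hx, hrx⟩ := hrx
    obtain ⟨v, hv, hvr, -⟩ := h'.exists_isSimplicialOn (by omega) hrS hx hrx
    have hvs : G.Adj s v := by
      by_contra hvs
      rcases huniq v (hv.insert_of_not_adj fun e => hvs e.symm) with rfl | rfl
      · exact hvr rfl
      · exact hsS hv.1
    rcases hN' v hv.1 hvs with rfl | rfl
    · exact key v b haS hbS hab hsa hsb hra hN' hv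
    · exact key v a hbS haS hab.symm hsb hsa hrb (fun u hu hsu => (hN' u hu hsu).symm) hv

end IsTwoTreeOn

end TwoTree
section Levels

variable {V : Type} {G : SimpleGraph V} {r : V} {T Z : Finset V} {lev : V → ℕ} {d : ℕ}

/-- `lev` is the distance from `r` within `T`, all levels being at most `d`, and going away
from `r` is possible only from vertices of `Z`. -/
structure IsLevel (G : SimpleGraph V) (r : V) (T : Finset V) (lev : V → ℕ) (Z : Finset V)
    (d : ℕ) : Prop where
  subset : Z ⊆ T
  root_mem : r ∈ Z
  root_eq : lev r = 0
  le : ∀ v ∈ T, lev v ≤ d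
  exists_walk : ∀ v ∈ T, ∃ p : G.Walk r v, p.length ≤ lev v
  le_succ : ∀ u ∈ T, ∀ v ∈ T, G.Adj u v → lev u ≤ lev v + 1
  le_of_not_mem : ∀ u ∈ T, u ∉ Z → ∀ v ∈ T, G.Adj u v → lev v ≤ lev u

theorem IsLevel.extend [DecidableEq V] {z z' : V} {l : List V} {X : Finset V}
    (h : IsLevel G r T lev Z d) (hf : Fan G T z z' l) (hzZ : z ∈ Z) (hzZ' : z' ∈ Z)
    (hz : lev z = d) (hz' : lev z' = d) (hX : X ⊆ l.toFinset) :
    IsLevel G r (T ∪ l.toFinset) (fun v => if v ∈ T then lev v else d + 1) (Z ∪ X) (d + 1) where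
  subset := Finset.union_subset_union h.subset hX
  root_mem := Finset.mem_union_left _ h.root_mem
  root_eq := by simp [h.subset h.root_mem, h.root_eq]
  le v _ := by
    split_ifs with hv
    · have := h.le v hv
      omega
    · exact le_rfl
  exists_walk v hv := by
    split_ifs with hvT
    · exact h.exists_walk v hvT
    · have hvl : v ∈ l := by simpa [hvT] using hv
      obtain ⟨p, hp⟩ := h.exists_walk z (h.subset hzZ)
      refine ⟨p.concat (hf.adj_center v hvl).symm, ?_⟩
      rw [Walk.length_concat]
      omega
  le_succ u hu v hv huv := by
    split_ifs with huT hvT hvT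
    · exact h.le_succ u huT v hvT huv
    · have := h.le u huT
      omega
    · have hul : u ∈ l := by simpa [huT] using hu
      rcases hf.eq_of_adj u hul v hvT huv with rfl | rfl <;> omega
    · omega
  le_of_not_mem u hu huZ v hv huv := by
    have huZ' : u ∉ Z := fun hh => huZ (Finset.mem_union_left _ hh)
    split_ifs with hvT huT huT
    · exact h.le_of_not_mem u huT huZ' v hvT huv
    · have := h.le v hvT
      omega
    · have hvl : v ∈ l := by simpa [hvT] using hv
      rcases hf.eq_of_adj v hvl u huT huv.symm with rfl | rfl <;> contradiction
    · exact le_rfl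

theorem Layered.exists_isLevel [DecidableEq V] {a b : V} (h : Layered G r d T a b) :
    ∃ lev Z, IsLevel G r T lev Z d ∧ a ∈ Z ∧ b ∈ Z ∧ lev a = d ∧ lev b = d ∧
      Z.card = 2 * d + 1 := by
  induction h with
  | triangle x y hx hy hxy =>
    refine ⟨fun v => if v = r then 0 else 1, {r, x, y}, ⟨subset_rfl, by simp, by simp, ?_, ?_, ?_,
      fun u hu hu' => absurd hu hu'⟩, by simp, by simp, by simp [hx.ne'], by simp [hy.ne'], ?_⟩
    · intro v _
      split_ifs <;> omega
    · intro v hv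
      simp only [Finset.mem_insert, Finset.mem_singleton] at hv
      rcases hv with rfl | rfl | rfl
      · exact ⟨Walk.nil, by simp⟩
      · exact ⟨hx.toWalk, by simp [hx.ne']⟩
      · exact ⟨hy.toWalk, by simp [hy.ne']⟩
    · intro u _ v _ _
      split_ifs <;> omega
    · rw [Finset.card_eq_three.2 ⟨r, x, y, hx.ne, hy.ne, hxy.ne, rfl⟩]
  | next i T z z' p q l _ hf ih =>
    obtain ⟨lev, Z, hL, hz, hz', hlz, hlz', hcard⟩ := ih
    have hp := hf.not_mem p (by simp)
    have hq := hf.not_mem q (by simp)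
    have hpq : p ≠ q := by
      have := hf.nodup
      aesop
    refine ⟨_, Z ∪ {p, q}, hL.extend hf hz hz' hlz hlz' ?_, by simp, by simp, by simp [hp],
      by simp [hq], ?_⟩
    · intro v hv
      simp only [Finset.mem_insert, Finset.mem_singleton] at hv
      rcases hv with rfl | rfl <;> simp
    · have hd : Disjoint Z {p, q} := by
        simp only [Finset.disjoint_insert_right, Finset.disjoint_singleton_right]
        exact ⟨fun hh => hp (hL.subset hh), fun hh => hq (hL.subset hh)⟩
      rw [Finset.card_union_of_disjoint hd, hcard, Finset.card_pair hpq]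
      ring
  | symm i T a b _ ih =>
    obtain ⟨lev, Z, hL, ha, hb, hla, hlb, hcard⟩ := ih
    exact ⟨lev, Z, hL, hb, ha, hlb, hla, hcard⟩

theorem Layered.exists_isLevel_of_fan [DecidableEq V] {a b s : V} {l : List V}
    (h : Layered G r d T a b) (hf : Fan G T a b (s :: l)) :
    ∃ lev Z, IsLevel G r (T ∪ (s :: l).toFinset) lev Z (d + 1) ∧ s ∈ Z ∧ lev s = d + 1 ∧
      Z.card = 2 * (d + 1) := by
  obtain ⟨lev, Z, hL, ha, hb, hla, hlb, hcard⟩ := h.exists_isLevel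
  have hs := hf.not_mem s (by simp)
  refine ⟨_, Z ∪ {s}, hL.extend hf ha hb hla hlb (by simp), by simp, by simp [hs], ?_⟩
  have hd : Disjoint Z {s} := Finset.disjoint_singleton_right.2 fun hh => hs (hL.subset hh)
  rw [Finset.card_union_of_disjoint hd, hcard, Finset.card_singleton]
  ring

/-- The contribution of `v` to the potential of a configuration with `c` pebbles on `v`. -/
noncomputable def IsLevel.weight [DecidableEq V] (lev : V → ℕ) (Z : Finset V) (d : ℕ) (v : V)
    (c : ℕ) : ℕ :=
  if v ∈ Z then 2 ^ (d - lev v) * c else 2 ^ (d - lev v + 1) * (c - 1)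

namespace IsLevel

theorem weight_add_two [DecidableEq V] (v : V) (c : ℕ) :
    weight lev Z d v c + 2 ^ (d - lev v + 1) ≤ weight lev Z d v (c + 2) := by
  unfold weight
  split_ifs
  · rw [mul_add, pow_succ]
  · rw [← Nat.mul_succ]
    exact Nat.mul_le_mul_left _ (by omega)

variable [Fintype V] {s : V}

theorem weight_add_one [DecidableEq V] (h : IsLevel G r Finset.univ lev Z d) {u v : V}
    (huv : G.Adj u v) (c : ℕ) :
    weight lev Z d v (c + 1) ≤ weight lev Z d v c + 2 ^ (d - lev u + 1) := by
  unfold weight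
  split_ifs with hv
  · rw [mul_add, mul_one]
    have := h.le_succ u (Finset.mem_univ u) v (Finset.mem_univ v) huv
    have : 2 ^ (d - lev v) ≤ 2 ^ (d - lev u + 1) :=
      Nat.pow_le_pow_right two_pos (by omega)
    omega
  · have := h.le_of_not_mem v (Finset.mem_univ v) hv u (Finset.mem_univ u) huv.symm
    have h2 : 2 ^ (d - lev v + 1) ≤ 2 ^ (d - lev u + 1) :=
      Nat.pow_le_pow_right two_pos (by omega)
    calc _ ≤ 2 ^ (d - lev v + 1) * (c - 1 + 1) := Nat.mul_le_mul_left _ (by omega)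
      _ ≤ _ := by rw [mul_add, mul_one]; omega

theorem sum_weight_le_of_step [DecidableEq V] (h : IsLevel G r Finset.univ lev Z d)
    {C C' : V → ℕ} (hC : PebStep G C C') :
    ∑ v, weight lev Z d v (C' v) ≤ ∑ v, weight lev Z d v (C v) := by
  obtain ⟨u, v, huv, -, hu, hv, hw⟩ := hC
  have hvu : v ∈ Finset.univ.erase u := by simp [huv.ne']
  simp only [← Finset.add_sum_erase _ _ (Finset.mem_univ u), ← Finset.add_sum_erase _ _ hvu]
  rw [Finset.sum_congr rfl fun w hw' => by
    rw [hw w (by simp_all) (by simp_all)], ← hu, hv]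
  have h1 := weight_add_two (lev := lev) (Z := Z) (d := d) u (C' u)
  have h2 := h.weight_add_one huv (C v)
  omega

theorem not_tSolvable_of_sum_weight_lt [DecidableEq V] (h : IsLevel G r Finset.univ lev Z d)
    {C : V → ℕ} {t : ℕ} (hC : ∑ v, weight lev Z d v (C v) < t * 2 ^ d) :
    ¬ TSolvable G C r t := by
  rintro ⟨C', hstep, ht⟩
  have hle : ∑ v, weight lev Z d v (C' v) ≤ ∑ v, weight lev Z d v (C v) := by
    clear ht
    induction hstep with
    | refl => exact le_rfl
    | tail _ hs ih => exact (h.sum_weight_le_of_step hs).trans ih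
  have h1 : weight lev Z d r (C' r) ≤ ∑ v, weight lev Z d v (C' v) :=
    Finset.single_le_sum (f := fun v => weight lev Z d v (C' v)) (fun _ _ => Nat.zero_le _)
      (Finset.mem_univ r)
  rw [weight, if_pos h.root_mem, h.root_eq, Nat.sub_zero] at h1
  have h2 : 2 ^ d * t ≤ 2 ^ d * C' r := Nat.mul_le_mul_left _ ht
  rw [mul_comm] at hC
  omega

theorem exists_not_tSolvable (h : IsLevel G r Finset.univ lev Z d) (hs : s ∈ Z)
    (hsd : lev s = d) {t : ℕ} (ht : 1 ≤ t) :
    ∃ C : V → ℕ, ∑ v, C v + Z.card + 1 = t * 2 ^ d + Fintype.card V ∧ ¬ TSolvable G C r t := by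
  classical
  have hpos : 1 ≤ t * 2 ^ d := Nat.mul_pos ht (by positivity)
  refine ⟨fun v => (if v = s then t * 2 ^ d - 1 else 0) + if v ∈ Z then 0 else 1, ?_,
    h.not_tSolvable_of_sum_weight_lt ?_⟩
  · rw [Finset.sum_add_distrib, Finset.sum_ite_eq' Finset.univ s, if_pos (Finset.mem_univ s)]
    have h1 : ∑ v, (if v ∈ Z then 0 else 1) = Zᶜ.card := by
      rw [Finset.card_eq_sum_ones, Finset.compl_eq_univ_sdiff, Finset.sdiff_eq_filter,
        Finset.sum_filter]
      simp only [ite_not]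
    rw [h1, ← Finset.card_add_card_compl Z]
    omega
  · have h1 : ∀ v, weight lev Z d v
        ((if v = s then t * 2 ^ d - 1 else 0) + if v ∈ Z then 0 else 1) =
        if v = s then t * 2 ^ d - 1 else 0 := by
      intro v
      unfold weight
      by_cases hv : v = s
      · subst hv
        simp [hs, hsd]
      · by_cases hvZ : v ∈ Z <;> simp [hv, hvZ]
    simp only [h1, Finset.sum_ite_eq', Finset.mem_univ, if_true]
    omega

theorem le_length (h : IsLevel G r Finset.univ lev Z d) {u v : V} (p : G.Walk u v) :
    lev v ≤ lev u + p.length := by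
  induction p with
  | nil => simp
  | cons huv p ih =>
    have := h.le_succ _ (Finset.mem_univ _) _ (Finset.mem_univ _) huv.symm
    rw [Walk.length_cons]
    omega

theorem dist_eq (h : IsLevel G r Finset.univ lev Z d) (v : V) : G.dist r v = lev v := by
  obtain ⟨p, hp⟩ := h.exists_walk v (Finset.mem_univ v)
  obtain ⟨q, hq⟩ := p.reachable.exists_walk_length_eq_dist
  have h1 := h.le_length q
  have h2 := dist_le p
  have h3 := h.root_eq
  omega

theorem eccG_eq (h : IsLevel G r Finset.univ lev Z d) (hsd : lev s = d) : eccG G r = d := by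
  have : Nonempty V := ⟨r⟩
  unfold eccG
  simp only [h.dist_eq]
  refine le_antisymm (ciSup_le fun v => h.le v (Finset.mem_univ v)) ?_
  rw [← hsd]
  exact le_ciSup (Set.finite_range lev).bddAbove s

end IsLevel

end Levels

section Main

variable {V : Type} [Fintype V] {G : SimpleGraph V} {r s : V}

theorem IsLevel.piT_eq {lev : V → ℕ} {Z : Finset V} {d t : ℕ}
    (h : IsLevel G r Finset.univ lev Z d) (hs : s ∈ Z) (hsd : lev s = d)
    (hZ : Z.card = 2 * d) (ht : 1 ≤ t)
    (hup : ∀ C : V → ℕ, Fintype.card V + t * 2 ^ d ≤ ∑ v, C v + 2 * d → TSolvable G C r t) :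
    piT G r t = t * 2 ^ d + Fintype.card V - 2 * d := by
  have hmem : t * 2 ^ d + Fintype.card V - 2 * d ∈
      {m | ∀ C : V → ℕ, m ≤ ∑ᶠ v, C v → TSolvable G C r t} := by
    intro C hC
    rw [finsum_eq_sum_of_fintype] at hC
    exact hup C (by omega)
  refine le_antisymm (Nat.sInf_le hmem) (le_csInf ⟨_, hmem⟩ ?_)
  · intro m hm
    by_contra! hlt
    obtain ⟨C, hC, hC'⟩ := h.exists_not_tSolvable hs hsd ht
    refine hC' (hm C ?_)
    rw [finsum_eq_sum_of_fintype]
    omega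

/-- Level structure of a 2-path, together with the matching upper bound. -/
theorem IsTwoTreeOn.exists_isLevel [DecidableEq V] (h : IsTwoTreeOn G Finset.univ)
    (hr : IsSimplicialOn G Finset.univ r) (hs : IsSimplicialOn G Finset.univ s) (hrs : r ≠ s)
    (huniq : ∀ v, IsSimplicialOn G Finset.univ v → v = r ∨ v = s) :
    ∃ lev Z d, IsLevel G r Finset.univ lev Z d ∧ s ∈ Z ∧ lev s = d ∧ Z.card = 2 * d ∧
      ∀ t, 1 ≤ t → ∀ C : V → ℕ, Fintype.card V + t * 2 ^ d ≤ ∑ v, C v + 2 * d →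
        TSolvable G C r t := by
  by_cases h4 : 4 ≤ (Finset.univ : Finset V).card
  · obtain ⟨i, T, z, z', l, hL, hf, hT⟩ := h.exists_layered h4 hr hs hrs huniq
    obtain ⟨lev, Z, hlev, hsZ, hsd, hcard⟩ := hL.exists_isLevel_of_fan hf
    rw [← hT] at hlev
    refine ⟨lev, Z, i + 1, hlev, hsZ, hsd, hcard, fun t ht C hC => hL.solvable_of_fan hf ht C ?_⟩
    rwa [← hT]
  · have h2 : (Finset.univ : Finset V).card = 2 := by
      by_contra h2
      have h3 : (Finset.univ : Finset V).card = 3 := by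
        have := h.two_le_card
        omega
      obtain ⟨x, -, y, -, hxy, hrx, hry, -⟩ := h.exists_of_isSimplicialOn h3.ge hr
      have huniv : {r, x, y} = (Finset.univ : Finset V) := by
        refine Finset.eq_of_subset_of_card_le (Finset.subset_univ _) ?_
        rw [h3, Finset.card_eq_three.2 ⟨r, x, y, hrx.ne, hry.ne, hxy.ne, rfl⟩]
      have hadj : G.Adj r s := by
        have hmem := Finset.mem_univ s
        rw [← huniv] at hmem
        simp only [Finset.mem_insert, Finset.mem_singleton] at hmem
        rcases hmem with rfl | rfl | rfl
        · contradiction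
        · exact hrx
        · exact hry
      obtain ⟨w, hw, hwr, hws⟩ :=
        h.exists_isSimplicialOn h3.ge (Finset.mem_univ r) (Finset.mem_univ s) hadj
      exact (huniq w hw).elim hwr hws
    obtain ⟨huv, hadj⟩ := h.eq_pair h2 (Finset.mem_univ r) (Finset.mem_univ s) hrs
    refine ⟨fun v => if v = r then 0 else 1, Finset.univ, 1, ⟨subset_rfl, Finset.mem_univ r,
      by simp, ?_, ?_, ?_, fun u hu hu' => absurd hu hu'⟩, Finset.mem_univ s, by simp [hrs.symm],
      h2, ?_⟩
    · intro v _
      split_ifs <;> omega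
    · intro v hv
      rw [huv] at hv
      simp only [Finset.mem_insert, Finset.mem_singleton] at hv
      rcases hv with rfl | rfl
      · exact ⟨Walk.nil, by simp⟩
      · exact ⟨hadj.toWalk, by simp [hrs.symm]⟩
    · intro u _ v _ _
      split_ifs <;> omega
    · intro t _ C hC
      rw [← Finset.card_univ, h2, huv, Finset.sum_pair hrs] at hC
      have h1 : TSolvable G (Pi.single r (C r) + Pi.single s (2 * (C s / 2))) r t := by
        refine TSolvable.of_move hadj.symm _ (TSolvable.of_root ?_)
        simp only [Pi.add_apply, Pi.single_eq_same]
        omega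
      refine h1.mono fun w => ?_
      simp only [Pi.add_apply, Pi.single_apply]
      split_ifs <;> subst_vars <;> first | contradiction | omega

theorem isSimplicialOn_univ_iff {v : V} : IsSimplicialOn G Finset.univ v ↔ IsSimplicial G v := by
  simp only [IsSimplicialOn, IsSimplicial, SimpleGraph.IsClique, Set.Pairwise, Finset.mem_univ,
    true_and, forall_const, mem_neighborSet]
  exact ⟨fun h a ha b hb => h a b ha hb, fun h a b ha hb => h ha hb⟩

end Main

/-- for a 2-path `G` on `n` vertices with simplicial vertex `r` of
eccentricity `d`, every configuration of size at least `2^d + n − 2d` is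
`r`-solvable, and consequently `π_t(G,r) = t·2^d + n − 2d` for all `t ≥ 1`. -/
theorem twoPath_simplicial_root_pebbling {V : Type} [Fintype V] (G : SimpleGraph V)
    (hG : IsTwoPath G) (r : V) (hr : IsSimplicial G r) (n d : ℕ)
    (hn : Fintype.card V = n) (hd : d = eccG G r) :
    (∀ C : V → ℕ, 2 ^ d + n - 2 * d ≤ ∑ᶠ v, C v → TSolvable G C r 1) ∧
    (∀ t : ℕ, 1 ≤ t → piT G r t = t * 2 ^ d + n - 2 * d) := by
  classical
  obtain ⟨h2, hS⟩ := hG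
  obtain ⟨s, hs, hrs, huniq⟩ : ∃ s, IsSimplicial G s ∧ r ≠ s ∧
      ∀ v, IsSimplicial G v → v = r ∨ v = s := by
    obtain ⟨a, b, hab, hS⟩ := Set.ncard_eq_two.1 hS
    simp only [Set.ext_iff, Set.mem_ofPred_eq, Set.mem_insert_iff, Set.mem_singleton_iff] at hS
    rcases (hS r).1 hr with rfl | rfl
    · exact ⟨b, (hS b).2 (Or.inr rfl), hab, fun v hv => (hS v).1 hv⟩
    · exact ⟨a, (hS a).2 (Or.inl rfl), hab.symm, fun v hv => ((hS v).1 hv).symm⟩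
  simp only [← isSimplicialOn_univ_iff] at hr hs huniq
  obtain ⟨lev, Z, e, hL, hsZ, hse, hZ, hup⟩ :=
    (h2.isTwoTreeOn Finset.univ Finset.mem_univ).exists_isLevel hr hs hrs huniq
  obtain rfl : d = e := hd.trans (hL.eccG_eq hse)
  subst hn
  refine ⟨fun C hC => hup 1 le_rfl C ?_, fun t ht => hL.piT_eq hsZ hse hZ ht (hup t ht)⟩
  rw [finsum_eq_sum_of_fintype] at hC
  omega
end
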